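/- Let k ≥ 3 be an integer and χ a quadratic Dirichlet character modulo D with χ(−1) = (−1)^k. Define the Eisenstein series E(τ) = (1/2)·∑ χ(d)·(cτ+d)^{−k}, the absolutely convergent sum over all pairs (c,d) ∈ ℤ² with gcd(c,d) = 1 and D ∣ c. Let r be a positive divisor of D, s = D/r, and write χ = χ_r·χ_s for the unique factorization into quadratic Dirichlet characters χ_r modulo r and χ_s modulo s (concretely χ_r(x) = χ(y) for any integer y with y ≡ x (mod r) and y ≡ 1 (mod s), and symmetrically for χ_s). Choose integers α, β, γ, δ with r·α·δ − s·β·γ = 1 and set W_r = [[rα, β],[Dγ, rδ]], a matrix of determinant r. Suppose e_r : ℕ → ℂ satisfies χ_r(−β)·χ_s(αr)·(E ∣[k] W_r)(τ) = ∑_{m≥0} e_r(m)e^{2πimτ} for all τ ∈ ℍ, and suppose f ∈ M^{!,∞}_{2−k}(D,χ) with Fourier coefficients c(m) is such that some c_r : ℤ → ℂ, vanishing for m sufficiently negative, satisfies χ_r(β)·χ_s(α)·(f ∣[2−k] W_r)(τ) = ∑_m c_r(m)e^{2πimτ} for all τ ∈ ℍ. Then c_r(0) + ∑_{m>0} c(−m)·e_r(m)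 = 0 (a finite sum). -/

import Mathlib

/-!
Statement 3 (Proposition 4.2.1): the constant term of `f ∈ M^{!,∞}_{2-k}(D,χ)` at the cusp
`∞_r = r/D` pairs against the Fourier coefficients of the normalized weight `k` Eisenstein
series `E_r` for the cusp `∞_r`: `c_r(0) + ∑_{m>0} c(-m) e_r(m) = 0`.
-/

noncomputable section

/-- The complex upper half plane, as a subset of `ℂ`. -/
def UHP : Set ℂ := {z : ℂ | 0 < z.im}

/-- A `2 × 2` integer matrix viewed as a real matrix. -/
def matR (g : Matrix (Fin 2) (Fin 2) ℤ) : Matrix (Fin 2) (Fin 2) ℝ :=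
  g.map fun x => (x : ℝ)

/-- The weight `w` slash action of a real `2 × 2` matrix `g = [[a,b],[c,d]]` (of positive
determinant) on functions: `(f ∣[w] g)(τ) = det(g)^{w/2} (cτ+d)^{-w} f((aτ+b)/(cτ+d))`. -/
def slash (w : ℤ) (g : Matrix (Fin 2) (Fin 2) ℝ) (f : ℂ → ℂ) : ℂ → ℂ := fun τ =>
  (Real.sqrt g.det : ℂ) ^ w * ((g 1 0 : ℂ) * τ + (g 1 1 : ℂ)) ^ (-w) *
    f (((g 0 0 : ℂ) * τ + (g 0 1 : ℂ)) / ((g 1 0 : ℂ) * τ + (g 1 1 : ℂ)))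

/-- `χ : ℤ → ℂ` is a quadratic Dirichlet character modulo `D`. -/
structure IsQuadDirChar (D : ℕ) (χ : ℤ → ℂ) : Prop where
  periodic : ∀ a : ℤ, χ (a + D) = χ a
  mul : ∀ a b : ℤ, χ (a * b) = χ a * χ b
  eq_zero_iff : ∀ a : ℤ, χ a = 0 ↔ ¬ IsCoprime a (D : ℤ)
  sq_vals : ∀ a : ℤ, χ a = 0 ∨ χ a = 1 ∨ χ a = -1

/-- `f : ℍ → ℂ` is a weakly holomorphic modular form of weight `w`, level `Γ₀(D)`, character
`χ`, holomorphic outside the cusp `∞`, with Fourier coefficients `c`; i.e. `f ∈ M^{!,∞}_w(D,χ)`.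
Only the restriction of `f` to the upper half plane matters. -/
structure IsWeaklyHolInfty (D : ℕ) (χ : ℤ → ℂ) (w : ℤ) (f : ℂ → ℂ) (c : ℤ → ℂ) : Prop where
  holo : DifferentiableOn ℂ f UHP
  transform : ∀ γ : Matrix.SpecialLinearGroup (Fin 2) ℤ, (D : ℤ) ∣ γ 1 0 →
    ∀ τ ∈ UHP, slash w (matR γ) f τ = χ (γ 1 1) * f τ
  coeff_bddBelow : ∃ m₀ : ℤ, ∀ m : ℤ, m < -m₀ → c m = 0
  fourier : ∀ τ ∈ UHP,
    HasSum (fun m : ℤ => c m * Complex.exp (2 * (Real.pi : ℂ) * Complex.I * m * τ)) (f τ)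
  bdd_at_other_cusps : ∀ γ : Matrix.SpecialLinearGroup (Fin 2) ℤ, ¬ (D : ℤ) ∣ γ 1 0 →
    ∃ C : ℝ, ∀ τ : ℂ, 1 ≤ τ.im → ‖slash w (matR γ) f τ‖ ≤ C

open scoped Classical in
/-- The weight `k` Eisenstein series
`E(τ) = (1/2) ∑ χ(d) (cτ+d)^{-k}`, the sum being over pairs `(c,d) ∈ ℤ²` with
`gcd(c,d) = 1` and `D ∣ c`. -/
def Eser (D : ℕ) (χ : ℤ → ℂ) (k : ℤ) : ℂ → ℂ := fun τ =>
  (1 / 2 : ℂ) * ∑' p : ℤ × ℤ,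
    if IsCoprime p.1 p.2 ∧ (D : ℤ) ∣ p.1 then
      χ p.2 * ((p.1 : ℂ) * τ + (p.2 : ℂ)) ^ (-k)
    else 0

open UpperHalfPlane Filter EisensteinSeries Matrix.SpecialLinearGroup
open scoped ModularForm MatrixGroups Manifold Topology Matrix

/-!
Write `E_r` for the normalized Eisenstein series at the cusp `∞_r`. The product `f E_r` has weight
`2` for `Γ₀(D)`, so its trace is a holomorphic form `R` of weight `2` for `SL₂(ℤ)`. A primitive of
`R` is invariant under every element with a fixed point, hence under `S` and `ST`, hence under `T`;
therefore `R` has constant term `0`. In other words the constant terms of `f E_r` over the cosets of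
`Γ₀(D)` add up to `0`.

Absorbing the dilation into the lattice sum gives
`E_r(τ) = r^{-k/2}/2 · ∑ χ_r(c) χ_s(d) (cτ+d)^{-k}` over coprime pairs with `s ∣ c`, and from this
sum one reads off that `E_r` vanishes at every cusp except `∞_r`; in particular `e_r(0) = 0` unless
`r = 1`. Since `f` is bounded away from `∞`, only two cusps contribute: `∞_r`, with `r` cosets of
contribution `c_r(0)/r` each, and `∞`, with `∑_{m>0} c(-m) e_r(m)` from the product of the two
expansions.
-/

/-! ### Weight two and level one -/

section LevelOne

variable {R : ℍ → ℂ}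

theorem exists_primitive (hR : MDiff R) : ∃ G : ℂ → ℂ, ∀ z : ℍ, HasDerivAt G (R z) z := by
  obtain ⟨G, hG⟩ := (convex_halfSpace_im_gt 0).exists_forall_hasDerivWithinAt
    (mdifferentiable_iff.mp hR)
  refine ⟨G, fun z => ?_⟩
  simpa using (hG z z.im_pos).hasDerivAt (isOpen_upperHalfPlaneSet.mem_nhds z.im_pos)

theorem hasDerivAt_comp_smul {G : ℂ → ℂ} (hG : ∀ z : ℍ, HasDerivAt G (R z) z) {g : SL(2, ℤ)}
    (hg : R ∣[(2 : ℤ)] g = R) (z : ℍ) :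
    HasDerivAt (fun w : ℂ => G ↑(g • ofComplex w)) (R z) z := by
  have hdet : (g : GL (Fin 2) ℝ).val.det = 1 := Matrix.SpecialLinearGroup.det_coe _
  have hmoeb := (hasStrictDerivAt_smul (hdet ▸ one_pos) z).hasDerivAt
  have hcomp := HasDerivAt.comp (z : ℂ) (by rw [ofComplex_apply]; exact hG (g • z)) hmoeb
  refine hcomp.congr_deriv ?_
  nth_rw 2 [← hg]
  rw [ModularForm.SL_slash_apply, hdet, zpow_neg]
  simp [zpow_ofNat]

theorem primitive_smul_of_fixed {G : ℂ → ℂ} (hG : ∀ z : ℍ, HasDerivAt G (R z) z) {g : SL(2, ℤ)}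
    (hg : R ∣[(2 : ℤ)] g = R) {p : ℍ} (hp : g • p = p) (z : ℍ) : G ↑(g • z) = G z := by
  have hderiv (w : ℂ) (hw : 0 < w.im) := hG ⟨w, hw⟩
  have hderiv' (w : ℂ) (hw : 0 < w.im) := hasDerivAt_comp_smul hG hg ⟨w, hw⟩
  simpa using isOpen_upperHalfPlaneSet.eqOn_of_deriv_eq
    (convex_halfSpace_im_gt 0).isPreconnected
    (fun w hw => (hderiv' w hw).differentiableAt.differentiableWithinAt)
    (fun w hw => (hderiv w hw).differentiableAt.differentiableWithinAt)
    (fun w hw => by rw [(hderiv' w hw).deriv, (hderiv w hw).deriv])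
    (x := (p : ℂ)) p.im_pos (by simp [hp]) z.im_pos

theorem S_smul_I : ModularGroup.S • I = I := by
  rw [modular_S_smul, UpperHalfPlane.ext_iff]
  simp

theorem S_smul_T_smul_ρ : ModularGroup.S • ModularGroup.T • ρ = ρ := by
  have hne : ((1 : ℝ) : ℂ) + ρ ≠ 0 := coe_vadd 1 ρ ▸ ne_zero _
  rw [modular_S_smul, modular_T_smul, UpperHalfPlane.ext_iff, UpperHalfPlane.coe_mk, coe_vadd,
    ← mul_one (_ : ℂ)⁻¹, inv_mul_eq_iff_eq_mul₀ (neg_ne_zero.mpr hne)]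
  grind [ρ_sq, Complex.ofReal_one]

theorem primitive_T_smul {G : ℂ → ℂ} (hG : ∀ z : ℍ, HasDerivAt G (R z) z)
    (hinv : ∀ g : SL(2, ℤ), R ∣[(2 : ℤ)] g = R) (z : ℍ) : G ↑(ModularGroup.T • z) = G z := by
  have hST := primitive_smul_of_fixed hG (hinv (ModularGroup.S * ModularGroup.T))
    (by rw [mul_smul, S_smul_T_smul_ρ]) z
  rwa [mul_smul, primitive_smul_of_fixed hG (hinv _) S_smul_I] at hST

end LevelOne

/-- The integral of `R` along the horizontal segment from `iy` to `1 + iy`. It is meaningful for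
`y > 0`; otherwise `ofComplex` takes junk values. -/
def period (R : ℍ → ℂ) (y : ℝ) : ℂ := ∫ x in (0 : ℝ)..1, R (ofComplex (x + y * Complex.I))

/-- The filter of approach to the cusp `∞` inside the vertical strip `|Re τ| ≤ 1`, which contains
the horizontal segments defining `period`. -/
def cuspStrip : Filter ℍ := atImInfty ⊓ 𝓟 {z : ℍ | |z.re| ≤ 1}

section Period

variable {R : ℍ → ℂ} {y : ℝ}

theorem coe_ofComplex_horizontal (x : ℝ) (hy : 0 < y) :
    ((ofComplex (x + y * Complex.I) : ℍ) : ℂ) = x + y * Complex.I := by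
  rw [ofComplex_apply_of_im_pos (by simpa using hy)]

theorem im_ofComplex_horizontal (x : ℝ) (hy : 0 < y) :
    (ofComplex (x + y * Complex.I) : ℍ).im = y := by
  simp [← coe_im, coe_ofComplex_horizontal x hy]

theorem re_ofComplex_horizontal (x : ℝ) (hy : 0 < y) :
    (ofComplex (x + y * Complex.I) : ℍ).re = x := by
  simp [← coe_re, coe_ofComplex_horizontal x hy]

theorem continuous_horizontal (hR : Continuous R) (hy : 0 < y) :
    Continuous fun x : ℝ => R (ofComplex (x + y * Complex.I)) := by
  refine hR.comp (isEmbedding_coe.continuous_iff.mpr ?_)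
  simp only [Function.comp_def, coe_ofComplex_horizontal _ hy]
  fun_prop

theorem norm_period_le {C : ℝ} (hy : 0 < y) (hC : ∀ z : ℍ, z.im = y → |z.re| ≤ 1 → ‖R z‖ ≤ C) :
    ‖period R y‖ ≤ C := by
  simpa [period] using intervalIntegral.norm_integral_le_of_norm_le_const (a := 0) (b := 1) (C := C)
    fun x hx => hC _ (im_ofComplex_horizontal x hy) <| by
      rw [Set.uIoc_of_le zero_le_one] at hx
      rw [re_ofComplex_horizontal x hy, abs_of_pos hx.1]
      exact hx.2

theorem period_sum {ι : Type*} (s : Finset ι) {R : ι → ℍ → ℂ} (hR : ∀ i, Continuous (R i))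
    (hy : 0 < y) : period (∑ i ∈ s, R i) y = ∑ i ∈ s, period (R i) y := by
  simp only [period, Finset.sum_apply]
  exact intervalIntegral.integral_finsetSum
    fun i _ => (continuous_horizontal (hR i) hy).intervalIntegrable _ _

theorem period_sub_const (hR : Continuous R) (hy : 0 < y) (L : ℂ) :
    period (fun z => R z - L) y = period R y - L := by
  simp [period,
    intervalIntegral.integral_sub ((continuous_horizontal hR hy).intervalIntegrable _ _)]

theorem tendsto_period (hR : Continuous R) {L : ℂ} (h : Tendsto R cuspStrip (𝓝 L)) :
    Tendsto (period R) atTop (𝓝 L) := by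
  rw [Metric.tendsto_nhds] at h ⊢
  intro ε hε
  have hclose := h (ε / 2) (half_pos hε)
  rw [cuspStrip, eventually_inf_principal, atImInfty, eventually_comap] at hclose
  filter_upwards [hclose, eventually_gt_atTop 0] with y hy hy0
  rw [dist_eq_norm, ← period_sub_const hR hy0]
  refine (norm_period_le hy0 fun z hz hre => ?_).trans_lt (half_lt_self hε)
  simpa [dist_eq_norm] using (hy z hz hre).le

theorem period_eq_sub_primitive (hR : Continuous R) {G : ℂ → ℂ}
    (hG : ∀ z : ℍ, HasDerivAt G (R z) z) (hy : 0 < y) :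
    period R y = G (1 + y * Complex.I) - G (y * Complex.I) := by
  have hderiv (x : ℝ) : HasDerivAt (fun x : ℝ => G (x + y * Complex.I))
      (R (ofComplex (x + y * Complex.I))) x := by
    have him : 0 < ((x : ℂ) + y * Complex.I).im := by simpa using hy
    rw [ofComplex_apply_of_im_pos him]
    exact ((hG ⟨_, him⟩).comp_add_const (x : ℂ) (y * Complex.I)).comp_ofReal
  simpa [period] using intervalIntegral.integral_eq_sub_of_hasDerivAt (fun x _ => hderiv x)
    ((continuous_horizontal hR hy).intervalIntegrable 0 1)

theorem period_eq_zero_of_levelOne (hR : MDiff R) (hinv : ∀ g : SL(2, ℤ), R ∣[(2 : ℤ)] g = R)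
    (hy : 0 < y) : period R y = 0 := by
  obtain ⟨G, hG⟩ := exists_primitive hR
  rw [period_eq_sub_primitive hR.continuous hG hy, sub_eq_zero]
  have hT := primitive_T_smul hG hinv ⟨y * Complex.I, by simpa using hy⟩
  rw [modular_T_smul] at hT
  simpa using hT

end Period

section Trace

variable {Γ : Subgroup SL(2, ℤ)} {h : ℍ → ℂ}

theorem slash_out_inv (hinv : ∀ g ∈ Γ, h ∣[(2 : ℤ)] g = h) (g : SL(2, ℤ)) :
    h ∣[(2 : ℤ)] (g : SL(2, ℤ) ⧸ Γ).out⁻¹ = h ∣[(2 : ℤ)] g⁻¹ := by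
  obtain ⟨γ, hγ⟩ := QuotientGroup.mk_out_eq_mul Γ g
  rw [hγ, mul_inv_rev, SlashAction.slash_mul, hinv _ (inv_mem γ.2)]

variable [Fintype (SL(2, ℤ) ⧸ Γ)]

theorem trace_slash (hinv : ∀ g ∈ Γ, h ∣[(2 : ℤ)] g = h) (g : SL(2, ℤ)) :
    (∑ q : SL(2, ℤ) ⧸ Γ, h ∣[(2 : ℤ)] q.out⁻¹) ∣[(2 : ℤ)] g =
      ∑ q : SL(2, ℤ) ⧸ Γ, h ∣[(2 : ℤ)] q.out⁻¹ := by
  rw [SlashAction.sum_slash, ← Equiv.sum_comp (MulAction.toPerm g : Equiv.Perm (SL(2, ℤ) ⧸ Γ))]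
  refine Finset.sum_congr rfl fun q _ => ?_
  induction q using QuotientGroup.induction_on with
  | H x =>
    rw [MulAction.toPerm_apply, MulAction.Quotient.smul_coe, slash_out_inv hinv,
      slash_out_inv hinv, ← SlashAction.slash_mul, smul_eq_mul, mul_inv_rev, inv_mul_cancel_right]

/-- A holomorphic weight `2` form has no residues away from the cusps, so its constant terms at the
cusps add up to `0`: this is the level one case applied to its trace. -/
theorem sum_limit_period_eq_zero (hh : MDiff h) (hinv : ∀ g ∈ Γ, h ∣[(2 : ℤ)] g = h)
    {L : SL(2, ℤ) ⧸ Γ → ℂ}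
    (hL : ∀ g : SL(2, ℤ), Tendsto (period (h ∣[(2 : ℤ)] g)) atTop (𝓝 (L (g⁻¹ : SL(2, ℤ))))) :
    ∑ q, L q = 0 := by
  have hslash (g : SL(2, ℤ)) : MDiff (h ∣[(2 : ℤ)] g) := hh.slash 2 (g : GL (Fin 2) ℝ)
  have hlim : Tendsto (fun y => ∑ q : SL(2, ℤ) ⧸ Γ, period (h ∣[(2 : ℤ)] q.out⁻¹) y) atTop
      (𝓝 (∑ q, L q)) :=
    tendsto_finsetSum _ fun q _ => by simpa using hL q.out⁻¹
  refine tendsto_nhds_unique (hlim.congr' ?_) tendsto_const_nhds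
  filter_upwards [eventually_gt_atTop 0] with y hy
  rw [← period_sum _ (fun q => (hslash _).continuous) hy]
  exact period_eq_zero_of_levelOne (MDifferentiable.sum fun q _ => hslash _) (trace_slash hinv) hy

end Trace

/-! ### Fourier expansions -/

/-- The exponential `q^m = e^{2πimτ}`. -/
def qexp (m : ℤ) (τ : ℂ) : ℂ := Complex.exp (2 * (Real.pi : ℂ) * Complex.I * m * τ)

theorem norm_qexp (m : ℤ) (τ : ℂ) : ‖qexp m τ‖ = Real.exp (-(2 * Real.pi * m * τ.im)) := by
  rw [qexp, Complex.norm_exp]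
  simp

theorem qexp_add (m n : ℤ) (τ : ℂ) : qexp (m + n) τ = qexp m τ * qexp n τ := by
  rw [qexp, qexp, qexp, ← Complex.exp_add]
  push_cast
  ring_nf

@[simp]
theorem qexp_zero (τ : ℂ) : qexp 0 τ = 1 := by simp [qexp]

@[fun_prop]
theorem differentiable_qexp (m : ℤ) : Differentiable ℂ (qexp m) := by
  unfold qexp
  fun_prop

theorem period_qexp (m : ℤ) {y : ℝ} (hy : 0 < y) :
    period (fun z => qexp m z) y = if m = 0 then 1 else 0 := by
  simp only [period, coe_ofComplex_horizontal _ hy]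
  split_ifs with h
  · simp [h]
  have hc : 2 * (Real.pi : ℂ) * Complex.I * m ≠ 0 := by simp [h, Real.pi_ne_zero]
  have hexp : Complex.exp (2 * (Real.pi : ℂ) * Complex.I * m) = 1 :=
    Complex.exp_eq_one_iff.mpr ⟨m, by ring⟩
  simp [qexp, mul_add, Complex.exp_add, intervalIntegral.integral_mul_const,
    integral_exp_mul_complex hc, hexp]

theorem tendsto_const_mul_exp_neg_atTop {m : ℤ} (hm : 0 < m) (C : ℝ) :
    Tendsto (fun y : ℝ => C * Real.exp (-(2 * Real.pi * m * y))) atTop (𝓝 0) := by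
  have hpos : 0 < 2 * Real.pi * (m : ℝ) := by positivity
  simpa using (Real.tendsto_exp_neg_atTop_nhds_zero.comp
    (tendsto_id.const_mul_atTop hpos)).const_mul C

/-- `g` has the Fourier expansion `∑ a(i) q^{n(i)}` on the upper half plane. The index type is
arbitrary and `n` need not be injective, so that expansions over `ℕ` and `ℤ` and products of
expansions are all of this form. -/
def HasQExp {ι : Type*} (n : ι → ℤ) (a : ι → ℂ) (g : ℍ → ℂ) : Prop :=
  ∀ τ : ℍ, HasSum (fun i => a i * qexp (n i) τ) (g τ)

namespace HasQExp

variable {ι κ : Type*} {n : ι → ℤ} {a : ι → ℂ} {g : ℍ → ℂ}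

theorem summable_norm (h : HasQExp n a g) {y : ℝ} (hy : 0 < y) :
    Summable fun i => ‖a i‖ * Real.exp (-(2 * Real.pi * n i * y)) := by
  simpa [norm_qexp] using (h ⟨y * Complex.I, by simpa using hy⟩).summable.norm

theorem mul {m : κ → ℤ} {b : κ → ℂ} {e : ℍ → ℂ} (h : HasQExp n a g) (h' : HasQExp m b e) :
    HasQExp (fun p : ι × κ => n p.1 + m p.2) (fun p => a p.1 * b p.2) (g * e) := by
  intro τ
  have hsummable := summable_mul_of_summable_norm (f := fun i => a i * qexp (n i) τ)
    (g := fun j => b j * qexp (m j) τ) (h τ).summable.norm (h' τ).summable.norm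
  exact ((h τ).mul (h' τ) hsummable).congr_fun fun p => by rw [qexp_add, mul_mul_mul_comm]

theorem qexp_mul (h : HasQExp n a g) (m : ℤ) :
    HasQExp (fun i => m + n i) a (fun z => qexp m z * g z) := fun τ =>
  ((h τ).mul_left (qexp m τ)).congr_fun fun i => by rw [qexp_add, mul_left_comm]

theorem hasSum_period [Countable ι] (h : HasQExp n a g) {y : ℝ} (hy : 0 < y) :
    HasSum (fun i => if n i = 0 then a i else 0) (period g y) := by
  have hterm (i : ι) : (∫ x in (0 : ℝ)..1, a i * qexp (n i) (x + y * Complex.I)) =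
      if n i = 0 then a i else 0 := by
    have hq := period_qexp (n i) hy
    simp only [period, coe_ofComplex_horizontal _ hy] at hq
    rw [intervalIntegral.integral_const_mul, hq, mul_ite, mul_one, mul_zero]
  simp_rw [← hterm]
  refine intervalIntegral.hasSum_integral_of_dominated_convergence
    (F := fun i (x : ℝ) => a i * qexp (n i) (x + y * Complex.I))
    (f := fun x : ℝ => g (ofComplex (x + y * Complex.I)))
    (fun i _ => ‖a i‖ * Real.exp (-(2 * Real.pi * n i * y))) (fun i => ?_)
    (fun i => .of_forall fun x _ => ?_) (.of_forall fun _ _ => h.summable_norm hy)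
    (by simp) (.of_forall fun x _ => ?_)
  · exact Continuous.aestronglyMeasurable
      (((differentiable_qexp (n i)).continuous.comp (by fun_prop)).const_mul _)
  · simp [norm_qexp]
  · simpa only [coe_ofComplex_horizontal x hy] using h (ofComplex (x + y * Complex.I))

theorem norm_term_le (ha : ∀ i, n i < 0 → a i = 0) {y : ℝ} {τ : ℂ} (hτ : y ≤ τ.im) (i : ι) :
    ‖a i * qexp (n i) τ‖ ≤ ‖a i‖ * Real.exp (-(2 * Real.pi * n i * y)) := by
  rw [norm_mul, norm_qexp]
  rcases lt_or_ge (n i) 0 with hi | hi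
  · simp [ha i hi]
  · have : (0 : ℝ) ≤ n i := by exact_mod_cast hi
    gcongr

theorem mdifferentiable (h : HasQExp n a g) (ha : ∀ i, n i < 0 → a i = 0) : MDiff g := by
  rw [mdifferentiable_iff]
  intro τ hτ
  have hopen : IsOpen {z : ℂ | τ.im / 2 < z.im} := isOpen_lt continuous_const Complex.continuous_im
  have hmem : {z : ℂ | τ.im / 2 < z.im} ∈ 𝓝 τ := hopen.mem_nhds (half_lt_self (a := τ.im) hτ)
  have htsum := Complex.differentiableOn_tsum_of_summable_norm (h.summable_norm (half_pos hτ))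
    (fun i => ((differentiable_qexp (n i)).const_mul (a i)).differentiableOn) hopen
    (fun i z hz => norm_term_le ha (le_of_lt hz) i)
  refine ((htsum.differentiableAt hmem).congr_of_eventuallyEq ?_).differentiableWithinAt
  filter_upwards [hmem] with z hz
  have hz : 0 < z.im := (half_pos hτ).trans hz
  simpa [ofComplex_apply_of_im_pos hz] using (h ⟨z, hz⟩).tsum_eq.symm

theorem tendsto_atImInfty (h : HasQExp n a g) (ha : ∀ i, n i < 0 → a i = 0) :
    Tendsto g atImInfty (𝓝 (∑' i, if n i = 0 then a i else 0)) := by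
  have hlim (i : ι) : Tendsto (fun z : ℍ => a i * qexp (n i) z) atImInfty
      (𝓝 (if n i = 0 then a i else 0)) := by
    rcases lt_trichotomy (n i) 0 with hi | hi | hi
    · simp [ha i hi]
    · simp [hi]
    · rw [if_neg hi.ne', tendsto_zero_iff_norm_tendsto_zero]
      refine ((tendsto_const_mul_exp_neg_atTop hi ‖a i‖).comp tendsto_comap).congr fun z => ?_
      rw [norm_mul, norm_qexp, coe_im, Function.comp_apply]
  refine Tendsto.congr (fun z => (h z).tsum_eq)
    (tendsto_tsum_of_dominated_convergence (h.summable_norm one_pos) hlim ?_)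
  filter_upwards [tendsto_comap.eventually (eventually_ge_atTop 1)] with z hz i
  exact norm_term_le ha hz i

theorem period_qexp_neg_mul {a : ℤ → ℂ} (h : HasQExp id a g) (m : ℤ) {y : ℝ} (hy : 0 < y) :
    period (fun z => qexp (-m) z * g z) y = a m := by
  refine ((h.qexp_mul (-m)).hasSum_period hy).unique ?_
  simpa using hasSum_single (f := fun i => if -m + id i = 0 then a i else 0) m
    fun i hi => if_neg fun hi0 => hi (neg_add_eq_zero.mp hi0).symm

theorem coeff_unique {a b : ℤ → ℂ} (ha : HasQExp id a g) (hb : HasQExp id b g) : a = b :=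
  funext fun m => (ha.period_qexp_neg_mul m one_pos).symm.trans (hb.period_qexp_neg_mul m one_pos)

/-- The Fourier integrals `∫ q^{-m} g` do not depend on the height, and for `m < 0` they tend to `0`
as the height tends to infinity. -/
theorem coeff_eq_zero_of_isBoundedAtImInfty {a : ℤ → ℂ} (h : HasQExp id a g)
    (hg : IsBoundedAtImInfty g) {m : ℤ} (hm : m < 0) : a m = 0 := by
  obtain ⟨C, A, hC⟩ := isBoundedAtImInfty_iff.mp hg
  refine norm_le_zero_iff.mp (ge_of_tendsto
    (tendsto_const_mul_exp_neg_atTop (neg_pos.mpr hm) C) ?_)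
  filter_upwards [eventually_ge_atTop A, eventually_gt_atTop 0] with y hyA hy
  rw [← h.period_qexp_neg_mul m hy]
  refine norm_period_le hy fun z hz _ => ?_
  rw [norm_mul, norm_qexp, coe_im, hz, mul_comm]
  exact mul_le_mul_of_nonneg_right (hC z (hz ▸ hyA)) (Real.exp_pos _).le

theorem hasSum_period_mul {c : ℤ → ℂ} {e : ℕ → ℂ} {f E : ℍ → ℂ} (hf : HasQExp id c f)
    (hE : HasQExp Nat.cast e E) {y : ℝ} (hy : 0 < y) :
    HasSum (fun m : ℕ => c (-(m : ℤ)) * e m) (period (f * E) y) := by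
  have hinj : Function.Injective fun m : ℕ => (-(m : ℤ), m) := fun _ _ h => (Prod.ext_iff.mp h).2
  have hsum := (hf.mul hE).hasSum_period hy
  rw [← hinj.hasSum_iff] at hsum
  · simpa [Function.comp_def] using hsum
  · rintro ⟨j, m⟩ hp
    exact if_neg fun hjm => hp ⟨m, Prod.ext (neg_eq_of_add_eq_zero_left hjm) rfl⟩

end HasQExp

/-! ### Lattice sums -/

/-- The weight `k` lattice sum `∑ ψ(c,d) (cτ+d)^{-k}` with weight function `ψ`. Its value is junk
when the sum does not converge absolutely. -/
def latSum (k : ℤ) (ψ : (Fin 2 → ℤ) → ℂ) (z : ℍ) : ℂ := ∑' v, ψ v * eisSummand k v z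

section LatticeSum

variable {k : ℤ} {ψ : (Fin 2 → ℤ) → ℂ}

theorem vecMul_vecMul_inv (v : Fin 2 → ℤ) (g : SL(2, ℤ)) :
    (v ᵥ* g.1) ᵥ* (g⁻¹).1 = v := by
  rw [Matrix.vecMul_vecMul, ← coe_mul, mul_inv_cancel, coe_one, Matrix.vecMul_one]

theorem latSum_slash (k : ℤ) (ψ : (Fin 2 → ℤ) → ℂ) (g : SL(2, ℤ)) :
    latSum k ψ ∣[k] g = latSum k fun v => ψ (v ᵥ* (g⁻¹).1) := by
  ext z
  let e : (Fin 2 → ℤ) ≃ (Fin 2 → ℤ) :=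
    { toFun := fun v => v ᵥ* g.1
      invFun := fun v => v ᵥ* (g⁻¹).1
      left_inv := fun v => vecMul_vecMul_inv v g
      right_inv := fun v => by simpa only [inv_inv] using vecMul_vecMul_inv v g⁻¹ }
  rw [ModularForm.SL_slash_apply, latSum, latSum, ← tsum_mul_right,
    ← e.tsum_eq fun v => ψ (v ᵥ* (g⁻¹).1) * eisSummand k v z]
  refine tsum_congr fun v => ?_
  have hdenom := zpow_ne_zero k (denom_ne_zero g z)
  rw [eisSummand_SL2_apply, zpow_neg, mul_assoc, mul_right_comm, mul_inv_cancel₀ hdenom,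
    one_mul]
  exact congrArg (ψ · * _) (e.left_inv v).symm

theorem latSum_dilate {r : ℕ} (hr : 0 < r) (hψ : ∀ v, ψ v ≠ 0 → (r : ℤ) ∣ v 1) {z w : ℍ}
    (hw : (w : ℂ) = r * z) :
    latSum k ψ w = (r : ℂ) ^ (-k) * latSum k (fun v => ψ ![v 0, r * v 1]) z := by
  have hinj : Function.Injective fun v : Fin 2 → ℤ => ![v 0, r * v 1] := fun v v' h => by
    ext i
    fin_cases i
    · exact congrFun h 0
    · exact mul_left_cancel₀ (by exact_mod_cast hr.ne') (congrFun h 1)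
  rw [latSum, latSum, ← hinj.tsum_eq, ← tsum_mul_left]
  · refine tsum_congr fun v => ?_
    rw [mul_left_comm, eisSummand, eisSummand, ← mul_zpow, hw]
    simp [mul_add, mul_left_comm]
  · intro v hv
    obtain ⟨d, hd⟩ := hψ v (left_ne_zero_of_mul hv)
    exact ⟨![v 0, d], by ext i; fin_cases i <;> simp [hd]⟩

theorem im_le_norm_mul_add {v : Fin 2 → ℤ} (hv : v 0 ≠ 0) (z : ℍ) :
    z.im ≤ ‖(v 0 : ℂ) * z + v 1‖ := by
  have h1 : (1 : ℝ) ≤ |(v 0 : ℝ)| := by exact_mod_cast Int.one_le_abs hv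
  calc z.im ≤ |(v 0 : ℝ)| * z.im := le_mul_of_one_le_left z.im_pos.le h1
    _ = |((v 0 : ℂ) * z + v 1).im| := by simp [abs_mul, abs_of_pos z.im_pos]
    _ ≤ _ := Complex.abs_im_le_norm _

theorem tendsto_eisSummand (hk : 0 < k) (v : Fin 2 → ℤ) :
    Tendsto (eisSummand k v) atImInfty (𝓝 (if v 0 = 0 then (v 1 : ℂ) ^ (-k) else 0)) := by
  split_ifs with hv
  · simp [funext fun z => eisSummand.eq_1 k v z, hv]
  · have hnorm : Tendsto (fun z : ℍ => ‖(v 0 : ℂ) * z + v 1‖) atImInfty atTop :=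
      tendsto_atTop_mono (im_le_norm_mul_add hv) tendsto_comap
    rw [tendsto_zero_iff_norm_tendsto_zero]
    simp only [eisSummand, norm_zpow]
    exact (tendsto_zpow_atTop_zero (neg_neg_iff_pos.mpr hk)).comp hnorm

theorem exists_summable_bound_eisSummand (hk : 3 ≤ k) :
    ∃ u : (Fin 2 → ℤ) → ℝ, Summable u ∧
      ∀ z : ℍ, |z.re| ≤ 1 → 1 ≤ z.im → ∀ v, ‖eisSummand k v z‖ ≤ u v := by
  have hk2 : (2 : ℝ) < k := by exact_mod_cast hk
  refine ⟨_, (summable_one_div_norm_rpow hk2).mul_left (r ⟨⟨1, 1⟩, one_pos⟩ ^ (-(k : ℝ))),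
    fun z hre him v => ?_⟩
  rw [eisSummand, norm_zpow, ← Real.rpow_intCast, Int.cast_neg]
  exact summand_bound_of_mem_verticalStrip (by linarith) v one_pos ⟨hre, him⟩

theorem tendsto_latSum (hk : 3 ≤ k) (hψ : ∀ v, ‖ψ v‖ ≤ 1) :
    Tendsto (latSum k ψ) cuspStrip
      (𝓝 (∑' v, ψ v * if v 0 = 0 then (v 1 : ℂ) ^ (-k) else 0)) := by
  obtain ⟨u, hu, hbound⟩ := exists_summable_bound_eisSummand hk
  refine tendsto_tsum_of_dominated_convergence hu (fun v =>
    ((tendsto_eisSummand (by lia) v).const_mul (ψ v)).mono_left inf_le_left) ?_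
  filter_upwards [mem_inf_of_left (tendsto_comap.eventually (eventually_ge_atTop 1)),
    mem_inf_of_right (mem_principal_self _)] with z him hre v
  rw [norm_mul]
  exact (mul_le_of_le_one_left (norm_nonneg _) (hψ v)).trans (hbound z hre him v)

theorem eq_or_eq_neg_of_isCoprime {v : Fin 2 → ℤ} (hco : IsCoprime (v 0) (v 1)) (h0 : v 0 = 0) :
    v = ![0, 1] ∨ v = -![0, 1] := by
  rw [h0, isCoprime_zero_left, Int.isUnit_iff] at hco
  refine hco.imp (fun h1 => ?_) fun h1 => ?_ <;> ext i <;> fin_cases i <;> simp [h0, h1]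

theorem tsum_isCoprime_zero_left (hψ : ∀ v, ¬ IsCoprime (v 0) (v 1) → ψ v = 0)
    (hneg : ∀ v, ψ (-v) = (-1) ^ k * ψ v) :
    (∑' v, ψ v * if v 0 = 0 then (v 1 : ℂ) ^ (-k) else 0) = 2 * ψ ![0, 1] := by
  have hne : (![0, 1] : Fin 2 → ℤ) ≠ -![0, 1] := by decide
  have hsign : (-1 : ℂ) ^ k ≠ 0 := zpow_ne_zero k (by norm_num)
  rw [tsum_eq_sum (s := {![0, 1], -![0, 1]}), Finset.sum_pair hne, hneg]
  · simp [two_mul, mul_right_comm, mul_inv_cancel₀ hsign]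
  · intro v hv
    rw [Finset.mem_insert, Finset.mem_singleton] at hv
    by_cases hco : IsCoprime (v 0) (v 1)
    · rw [if_neg fun h0 => hv (eq_or_eq_neg_of_isCoprime hco h0), mul_zero]
    · rw [hψ v hco, zero_mul]

end LatticeSum

/-! ### Quadratic characters and their components -/

namespace IsQuadDirChar

variable {N : ℕ} {χ : ℤ → ℂ}

theorem congr (h : IsQuadDirChar N χ) {a b : ℤ} (hab : a ≡ b [ZMOD N]) : χ a = χ b := by
  obtain ⟨t, ht⟩ := hab.dvd
  have hperiodic := Function.Periodic.int_mul (show Function.Periodic χ N from h.periodic) t a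
  rw [← hperiodic, Int.cast_id, mul_comm, ← ht, add_sub_cancel]

theorem sq_eq_one (h : IsQuadDirChar N χ) {a : ℤ} (ha : IsCoprime a (N : ℤ)) : χ a * χ a = 1 := by
  rcases h.sq_vals a with h0 | h1 | h1
  · exact absurd ha ((h.eq_zero_iff a).mp h0)
  all_goals simp [h1]

theorem map_one (h : IsQuadDirChar N χ) : χ 1 = 1 := by
  rw [← mul_one (1 : ℤ), h.mul, h.sq_eq_one isCoprime_one_left]

theorem norm_le_one (h : IsQuadDirChar N χ) (a : ℤ) : ‖χ a‖ ≤ 1 := by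
  rcases h.sq_vals a with ha | ha | ha <;> simp [ha]

theorem ne_zero_iff (h : IsQuadDirChar N χ) {a : ℤ} : χ a ≠ 0 ↔ IsCoprime a (N : ℤ) := by
  rw [Ne, h.eq_zero_iff, not_not]

theorem map_zero (h : IsQuadDirChar N χ) : χ 0 = if N = 1 then 1 else 0 := by
  split_ifs with hN
  · rw [← h.map_one]
    exact h.congr (by simp [hN, Int.modEq_one])
  · rwa [h.eq_zero_iff, isCoprime_zero_left, Int.ofNat_isUnit, Nat.isUnit_iff]

theorem eq_of_mul_modEq_one (h : IsQuadDirChar N χ) {a b : ℤ} (hab : a * b ≡ 1 [ZMOD N]) :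
    χ a = χ b := by
  have hmul : χ a * χ b = 1 := by rw [← h.mul, h.congr hab, h.map_one]
  have ha : IsCoprime a (N : ℤ) := h.ne_zero_iff.mp (left_ne_zero_of_mul (hmul ▸ one_ne_zero))
  linear_combination (-χ a) * hmul + χ b * h.sq_eq_one ha

end IsQuadDirChar

theorem exists_modEq_and_modEq_one {m n : ℤ} (hmn : IsCoprime m n) (x : ℤ) :
    ∃ y, y ≡ x [ZMOD m] ∧ y ≡ 1 [ZMOD n] := by
  obtain ⟨u, v, huv⟩ := hmn
  exact ⟨v * n * x + u * m, Int.modEq_iff_dvd.mpr ⟨u * x - u, by linear_combination -x * huv⟩,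
    Int.modEq_iff_dvd.mpr ⟨v - v * x, by linear_combination -huv⟩⟩

/-- `ψ` is the component modulo `m` of `χ`, for coprime `m` and `n` and a character `χ` modulo
`mn`: `ψ x = χ y` whenever `y ≡ x (mod m)` and `y ≡ 1 (mod n)`. -/
def IsComponent (m n : ℕ) (χ ψ : ℤ → ℂ) : Prop :=
  ∀ x y : ℤ, y ≡ x [ZMOD m] → y ≡ 1 [ZMOD n] → ψ x = χ y

section Components

variable {m n : ℕ} {χ ψ : ℤ → ℂ}

theorem IsComponent.isQuadDirChar (hψ : IsComponent m n χ ψ) (hχ : IsQuadDirChar (m * n) χ)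
    (hmn : IsCoprime (m : ℤ) n) : IsQuadDirChar m ψ where
  periodic a := by
    obtain ⟨y, hm, hn⟩ := exists_modEq_and_modEq_one hmn a
    rw [hψ a y hm hn, hψ _ y (hm.trans (by simp [Int.ModEq])) hn]
  mul a b := by
    obtain ⟨y, hm, hn⟩ := exists_modEq_and_modEq_one hmn a
    obtain ⟨y', hm', hn'⟩ := exists_modEq_and_modEq_one hmn b
    rw [hψ a y hm hn, hψ b y' hm' hn', ← hχ.mul]
    exact hψ _ _ (hm.mul hm') (by simpa using hn.mul hn')
  eq_zero_iff a := by
    obtain ⟨y, hm, hn⟩ := exists_modEq_and_modEq_one hmn a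
    obtain ⟨t, ht⟩ := hm.dvd
    obtain ⟨u, hu⟩ := hn.dvd
    have hyn : IsCoprime y (n : ℤ) := ⟨1, u, by linear_combination -hu⟩
    rw [hψ a y hm hn, hχ.eq_zero_iff, not_iff_not, Nat.cast_mul, IsCoprime.mul_right_iff,
      and_iff_left hyn, ← sub_add_cancel a y, ht, add_comm, IsCoprime.add_mul_left_left_iff]
  sq_vals a := by
    obtain ⟨y, hm, hn⟩ := exists_modEq_and_modEq_one hmn a
    exact hψ a y hm hn ▸ hχ.sq_vals y

theorem IsComponent.mul_eq {ψ' : ℤ → ℂ} (hψ : IsComponent m n χ ψ) (hψ' : IsComponent n m χ ψ')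
    (hχ : IsQuadDirChar (m * n) χ) (hmn : IsCoprime (m : ℤ) n) (x : ℤ) : χ x = ψ x * ψ' x := by
  obtain ⟨y, hm, hn⟩ := exists_modEq_and_modEq_one hmn x
  obtain ⟨y', hn', hm'⟩ := exists_modEq_and_modEq_one hmn.symm x
  rw [hψ x y hm hn, hψ' x y' hn' hm', ← hχ.mul]
  refine hχ.congr (Int.modEq_iff_dvd.mpr ?_)
  rw [Nat.cast_mul]
  exact hmn.mul_dvd (by simpa using (hm.mul hm').symm.dvd) (by simpa using (hn.mul hn').symm.dvd)

end Components

/-- `χ = χ₁χ₂` is a factorization of a function into quadratic characters modulo `m` and `n`. -/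
structure IsQuadFactorization (m n : ℕ) (χ χ₁ χ₂ : ℤ → ℂ) : Prop where
  left : IsQuadDirChar m χ₁
  right : IsQuadDirChar n χ₂
  eq_mul : ∀ x, χ x = χ₁ x * χ₂ x

theorem IsQuadDirChar.isQuadFactorization {m n : ℕ} {χ ψ ψ' : ℤ → ℂ}
    (hχ : IsQuadDirChar (m * n) χ) (hmn : IsCoprime (m : ℤ) n) (hψ : IsComponent m n χ ψ)
    (hψ' : IsComponent n m χ ψ') : IsQuadFactorization m n χ ψ ψ' where
  left := hψ.isQuadDirChar hχ hmn
  right := hψ'.isQuadDirChar (mul_comm m n ▸ hχ) hmn.symm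
  eq_mul := hψ.mul_eq hψ' hχ hmn

/-! ### Eisenstein series at the cusps -/

theorem isCoprime_vecMul_iff {v : Fin 2 → ℤ} (g : SL(2, ℤ)) :
    IsCoprime ((v ᵥ* g.1) 0) ((v ᵥ* g.1) 1) ↔ IsCoprime (v 0) (v 1) :=
  ⟨fun h => by simpa only [vecMul_vecMul_inv] using h.vecMulSL g⁻¹, fun h => h.vecMulSL g⟩

theorem vecMul_inv_zero (v : Fin 2 → ℤ) (g : SL(2, ℤ)) :
    (v ᵥ* (g⁻¹).1) 0 = v 0 * g 1 1 - v 1 * g 1 0 := by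
  simp [SL2_inv_expl, Matrix.vecMul, dotProduct, Fin.sum_univ_two, sub_eq_add_neg]

theorem vecMul_inv_one (v : Fin 2 → ℤ) (g : SL(2, ℤ)) :
    (v ᵥ* (g⁻¹).1) 1 = v 1 * g 0 0 - v 0 * g 0 1 := by
  simp [SL2_inv_expl, Matrix.vecMul, dotProduct, Fin.sum_univ_two, sub_eq_add_neg, add_comm]

theorem det_fin_two_eq_one (g : SL(2, ℤ)) : g 0 0 * g 1 1 - g 0 1 * g 1 0 = 1 := by
  rw [← Matrix.det_fin_two, g.det_coe]

open scoped Classical in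
/-- The weight function of the Eisenstein series at a cusp: `χ₁(c)χ₂(d)` at the coprime pairs
`(c,d)` with `s ∣ c`, and `0` elsewhere. -/
def cuspWeight (s : ℕ) (χ₁ χ₂ : ℤ → ℂ) (v : Fin 2 → ℤ) : ℂ :=
  if IsCoprime (v 0) (v 1) ∧ (s : ℤ) ∣ v 0 then χ₁ (v 0) * χ₂ (v 1) else 0

section CuspWeight

variable {r s : ℕ} {χ χr χs : ℤ → ℂ}

theorem cuspWeight_ne_zero {v : Fin 2 → ℤ} (h : cuspWeight s χr χs v ≠ 0) :
    IsCoprime (v 0) (v 1) ∧ (s : ℤ) ∣ v 0 ∧ χr (v 0) ≠ 0 ∧ χs (v 1) ≠ 0 := by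
  unfold cuspWeight at h
  split_ifs at h with hv
  · exact ⟨hv.1, hv.2, left_ne_zero_of_mul h, right_ne_zero_of_mul h⟩
  · exact absurd rfl h

theorem norm_cuspWeight_le_one (hχ : IsQuadFactorization r s χ χr χs) (v : Fin 2 → ℤ) :
    ‖cuspWeight s χr χs v‖ ≤ 1 := by
  unfold cuspWeight
  split_ifs
  · rw [norm_mul]
    exact mul_le_one₀ (hχ.left.norm_le_one _) (norm_nonneg _) (hχ.right.norm_le_one _)
  · simp

theorem cuspWeight_neg (hχ : IsQuadFactorization r s χ χr χs) (v : Fin 2 → ℤ) :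
    cuspWeight s χr χs (-v) = χ (-1) * cuspWeight s χr χs v := by
  unfold cuspWeight
  simp only [Pi.neg_apply, IsCoprime.neg_neg_iff, dvd_neg]
  split_ifs
  · rw [← neg_one_mul (v 0), ← neg_one_mul (v 1), hχ.left.mul, hχ.right.mul, hχ.eq_mul,
      mul_mul_mul_comm]
  · rw [mul_zero]

theorem cuspWeight_vecMul_inv (hχ : IsQuadFactorization r s χ χr χs) {g : SL(2, ℤ)}
    (hg : ((r * s : ℕ) : ℤ) ∣ g 1 0) (v : Fin 2 → ℤ) :
    cuspWeight s χr χs (v ᵥ* (g⁻¹).1) = χ (g 1 1) * cuspWeight s χr χs v := by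
  obtain ⟨t, ht⟩ := hg
  rw [Nat.cast_mul] at ht
  have hdet := det_fin_two_eq_one g
  have hds : IsCoprime (s : ℤ) (g 1 1) :=
    ⟨-(g 0 1 * r * t), g 0 0, by linear_combination hdet + g 0 1 * ht⟩
  have hdvd : (s : ℤ) ∣ v 0 * g 1 1 - v 1 * g 1 0 ↔ (s : ℤ) ∣ v 0 := by
    rw [dvd_sub_left ⟨v 1 * r * t, by rw [ht]; ring⟩]
    exact ⟨hds.dvd_of_dvd_mul_right, fun h => h.mul_right _⟩
  unfold cuspWeight
  simp only [isCoprime_vecMul_iff]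
  simp only [vecMul_inv_zero, vecMul_inv_one, hdvd]
  split_ifs with hv
  · obtain ⟨u, hu⟩ := hv.2
    have hr : χr (v 0 * g 1 1 - v 1 * g 1 0) = χr (v 0 * g 1 1) :=
      hχ.left.congr (Int.modEq_iff_dvd.mpr ⟨v 1 * s * t, by rw [ht]; ring⟩)
    have hs : χs (v 1 * g 0 0 - v 0 * g 0 1) = χs (v 1 * g 0 0) :=
      hχ.right.congr (Int.modEq_iff_dvd.mpr ⟨u * g 0 1, by rw [hu]; ring⟩)
    have had : χs (g 0 0) = χs (g 1 1) := hχ.right.eq_of_mul_modEq_one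
      (Int.modEq_iff_dvd.mpr ⟨-(g 0 1 * r * t), by linear_combination -hdet - g 0 1 * ht⟩)
    rw [hr, hs, hχ.left.mul, hχ.right.mul, had, hχ.eq_mul]
    ring
  · rw [mul_zero]

theorem latSum_cuspWeight_slash_of_dvd (k : ℤ) (hχ : IsQuadFactorization r s χ χr χs)
    {g : SL(2, ℤ)} (hg : ((r * s : ℕ) : ℤ) ∣ g 1 0) :
    latSum k (cuspWeight s χr χs) ∣[k] g = χ (g 1 1) • latSum k (cuspWeight s χr χs) := by
  ext z
  simp only [latSum_slash, cuspWeight_vecMul_inv hχ hg, latSum, Pi.smul_apply, smul_eq_mul,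
    mul_assoc, tsum_mul_left]

theorem tendsto_latSum_cuspWeight_slash {k : ℤ} (hk : 3 ≤ k)
    (hχ : IsQuadFactorization r s χ χr χs) (hpar : χ (-1) = (-1) ^ k) (g : SL(2, ℤ)) :
    Tendsto (latSum k (cuspWeight s χr χs) ∣[k] g) cuspStrip
      (𝓝 (2 * cuspWeight s χr χs ![-g 1 0, g 0 0])) := by
  have hrow : ![0, 1] ᵥ* (g⁻¹).1 = ![-g 1 0, g 0 0] := by
    ext i
    fin_cases i
    · exact (vecMul_inv_zero _ g).trans (by simp)
    · exact (vecMul_inv_one _ g).trans (by simp)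
  have hvalue := tsum_isCoprime_zero_left (k := k)
    (ψ := fun v => cuspWeight s χr χs (v ᵥ* (g⁻¹).1))
    (fun v hv => by_contra fun h => hv ((isCoprime_vecMul_iff g⁻¹).mp (cuspWeight_ne_zero h).1))
    (fun v => by rw [Matrix.neg_vecMul, cuspWeight_neg hχ, hpar])
  rw [latSum_slash, ← hrow, ← hvalue]
  exact tendsto_latSum hk fun v => norm_cuspWeight_le_one hχ _

end CuspWeight

theorem sqrt_mul_sqrt_natCast (n : ℕ) : (√(n : ℝ) : ℂ) * √(n : ℝ) = n := by
  exact_mod_cast Real.mul_self_sqrt n.cast_nonneg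

theorem sqrt_natCast_ne_zero {n : ℕ} (hn : n ≠ 0) : (√(n : ℝ) : ℂ) ≠ 0 := by
  simpa using hn

section AtkinLehner

/-- The Atkin–Lehner matrix `W_r = [[rα, β], [rsγ, rδ]]`. -/
def atkinLehner (r s : ℕ) (α β γ δ : ℤ) : Matrix (Fin 2) (Fin 2) ℝ :=
  !![(r : ℝ) * (α : ℝ), (β : ℝ); ((r * s : ℕ) : ℝ) * (γ : ℝ), (r : ℝ) * (δ : ℝ)]

variable {r s : ℕ} {α β γ δ : ℤ}

/-- The matrix `V_j = W_r [[1, j], [0, r]] / r` of determinant one. The cosets `Γ₀(rs) V_j` with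
`0 ≤ j < r` are those of the matrices carrying `∞` to the cusp `∞_r`. -/
def cuspRep (hdet : (r : ℤ) * α * δ - s * β * γ = 1) (j : ℤ) : SL(2, ℤ) :=
  ⟨!![α, α * j + β; s * γ, s * γ * j + r * δ], by
    rw [Matrix.det_fin_two_of]; linear_combination hdet⟩

theorem det_matR (g : SL(2, ℤ)) : (matR g).det = 1 := by
  simp only [Matrix.det_fin_two, matR, Matrix.map_apply]
  exact_mod_cast det_fin_two_eq_one g

theorem slash_coe (w : ℤ) (f : ℂ → ℂ) (g : SL(2, ℤ)) (z : ℍ) :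
    ((fun z : ℍ => f z) ∣[w] g) z = slash w (matR g) f z := by
  rw [ModularForm.SL_slash_apply, ModularGroup.denom_apply, coe_specialLinearGroup_apply,
    slash, det_matR]
  simp [matR, mul_comm]

theorem det_atkinLehner (hdet : (r : ℤ) * α * δ - s * β * γ = 1) :
    (atkinLehner r s α β γ δ).det = r := by
  have hdetR : (r : ℝ) * α * δ - s * β * γ = 1 := by exact_mod_cast hdet
  rw [atkinLehner, Matrix.det_fin_two_of]
  push_cast
  linear_combination (r : ℝ) * hdetR

theorem slash_atkinLehner (hdet : (r : ℤ) * α * δ - s * β * γ = 1) (hr : r ≠ 0) (w : ℤ)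
    (f : ℂ → ℂ) (j : ℤ) (z : ℂ) : slash w (atkinLehner r s α β γ δ) f ((z + j) / r) =
      (√(r : ℝ) : ℂ) ^ w * slash w (matR (cuspRep hdet j)) f z := by
  have hr' : (r : ℂ) ≠ 0 := by exact_mod_cast hr
  have hnum : (r * α : ℂ) * ((z + j) / r) + β = α * z + (α * j + β) := by
    field_simp
    ring
  have hden : (r * s * γ : ℂ) * ((z + j) / r) + r * δ = s * γ * z + (s * γ * j + r * δ) := by
    field_simp
    ring
  rw [slash, slash, det_atkinLehner hdet, det_matR]
  simp [atkinLehner, matR, cuspRep, hnum, hden, -mul_eq_mul_left_iff, mul_assoc (_ ^ _)]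

end AtkinLehner

theorem Eser_eq_latSum (D : ℕ) (χ : ℤ → ℂ) (k : ℤ) (z : ℍ) :
    Eser D χ k z = 1 / 2 * latSum k (cuspWeight D 1 χ) z := by
  rw [Eser, latSum, ← (finTwoArrowEquiv ℤ).symm.tsum_eq]
  congr 2
  ext p
  simp [cuspWeight, eisSummand]

section Eisenstein

/-- The Eisenstein series `√r^{-k}/2 · ∑ χ₁(c)χ₂(d)(cτ+d)^{-k}` over the coprime pairs `(c,d)` with
`s ∣ c`: for a factorization `χ = χ₁χ₂` modulo `r` and `s` it is the normalized Eisenstein series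
`E_r`. -/
def eisensteinAtCusp (r s : ℕ) (χ₁ χ₂ : ℤ → ℂ) (k : ℤ) : ℍ → ℂ :=
  ((√(r : ℝ) : ℂ) ^ (-k) / 2) • latSum k (cuspWeight s χ₁ χ₂)

variable {r s : ℕ} {χ χr χs : ℤ → ℂ} {α β γ δ : ℤ}

theorem isCoprime_gamma (hdet : (r : ℤ) * α * δ - s * β * γ = 1) : IsCoprime ((s : ℤ) * γ) r :=
  ⟨-β, α * δ, by linear_combination hdet⟩

theorem isCoprime_beta (hdet : (r : ℤ) * α * δ - s * β * γ = 1) : IsCoprime β r :=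
  ⟨-(s * γ), α * δ, by linear_combination hdet⟩

theorem isCoprime_alpha_mul (hdet : (r : ℤ) * α * δ - s * β * γ = 1) :
    IsCoprime (α * r) (s : ℤ) :=
  ⟨δ, -(β * γ), by linear_combination hdet⟩

theorem vecMul_cuspRep_inv (hdet : (r : ℤ) * α * δ - s * β * γ = 1) (v : Fin 2 → ℤ) :
    v ᵥ* ((cuspRep hdet 0)⁻¹).1 = ![v 0 * (r * δ) - v 1 * (s * γ), v 1 * α - v 0 * β] := by
  ext i
  fin_cases i
  · simpa [cuspRep] using vecMul_inv_zero v (cuspRep hdet 0)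
  · simpa [cuspRep] using vecMul_inv_one v (cuspRep hdet 0)

theorem dvd_of_cuspWeight_vecMul_ne_zero (hdet : (r : ℤ) * α * δ - s * β * γ = 1) {v : Fin 2 → ℤ}
    (hv : cuspWeight (r * s) 1 χ (v ᵥ* ((cuspRep hdet 0)⁻¹).1) ≠ 0) : (r : ℤ) ∣ v 1 := by
  obtain ⟨-, ⟨t, ht⟩, -⟩ := cuspWeight_ne_zero hv
  rw [vecMul_cuspRep_inv, Matrix.cons_val_zero, Nat.cast_mul] at ht
  exact (isCoprime_gamma hdet).symm.dvd_of_dvd_mul_right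
    ⟨v 0 * δ - s * t, by linear_combination -ht⟩

/-- The terms with `gcd(c, r) > 1` vanish on both sides: on the left since then `(c, rd)` is not
primitive, on the right since `χ_r(c) = 0`. -/
theorem cuspWeight_vecMul_cuspRep_inv (hχ : IsQuadFactorization r s χ χr χs) (hr : r ≠ 0)
    (hdet : (r : ℤ) * α * δ - s * β * γ = 1) (v : Fin 2 → ℤ) :
    cuspWeight (r * s) 1 χ (![v 0, r * v 1] ᵥ* ((cuspRep hdet 0)⁻¹).1) =
      χr (-β) * χs (α * r) * cuspWeight s χr χs v := by
  have hdvd : ((r * s : ℕ) : ℤ) ∣ v 0 * (r * δ) - r * v 1 * (s * γ) ↔ (s : ℤ) ∣ v 0 := by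
    have hδ : IsCoprime (s : ℤ) δ := ⟨-(β * γ), r * α, by linear_combination hdet⟩
    rw [show v 0 * (r * δ) - r * v 1 * (s * γ) = r * (v 0 * δ - s * (v 1 * γ)) by ring,
      Nat.cast_mul, mul_dvd_mul_iff_left (by exact_mod_cast hr), dvd_sub_left (dvd_mul_right _ _)]
    exact ⟨hδ.dvd_of_dvd_mul_right, fun h => h.mul_right _⟩
  have hcoprime : IsCoprime (v 0) (r * v 1) ↔ IsCoprime (v 0) (v 1) ∧ χr (v 0) ≠ 0 := by
    rw [IsCoprime.mul_right_iff, hχ.left.ne_zero_iff, and_comm]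
  unfold cuspWeight
  simp only [isCoprime_vecMul_iff]
  simp only [vecMul_cuspRep_inv, Matrix.cons_val_zero, Matrix.cons_val_one,
    Matrix.cons_val_fin_one, hdvd, hcoprime]
  by_cases hv : IsCoprime (v 0) (v 1) ∧ (s : ℤ) ∣ v 0
  · by_cases h0 : χr (v 0) = 0
    · simp [h0]
    · obtain ⟨u, hu⟩ := hv.2
      have hχr : χr (r * v 1 * α - v 0 * β) = χr (-β * v 0) :=
        hχ.left.congr (Int.modEq_iff_dvd.mpr ⟨-(v 1 * α), by ring⟩)
      have hχs : χs (r * v 1 * α - v 0 * β) = χs (α * r * v 1) :=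
        hχ.right.congr (Int.modEq_iff_dvd.mpr ⟨u * β, by rw [hu]; ring⟩)
      simp only [hv, h0, ne_eq, not_false_eq_true, and_self, if_true, Pi.one_apply]
      rw [hχ.eq_mul, hχr, hχs, hχ.left.mul, hχ.right.mul]
      ring
  · rw [if_neg fun h => hv ⟨h.1.1, h.2⟩, if_neg hv, mul_zero]

theorem slash_atkinLehner_Eser (hr : 0 < r) (hχ : IsQuadFactorization r s χ χr χs)
    (hdet : (r : ℤ) * α * δ - s * β * γ = 1) (k : ℤ) (z : ℍ) :
    χr (-β) * χs (α * r) * slash k (atkinLehner r s α β γ δ) (Eser (r * s) χ k) z =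
      eisensteinAtCusp r s χr χs k z := by
  have hr' : (r : ℂ) ≠ 0 := by exact_mod_cast hr.ne'
  let w : ℍ := ⟨r * z, by simpa using mul_pos (Nat.cast_pos.mpr hr) z.im_pos⟩
  have hwz : ((w : ℂ) + (0 : ℤ)) / r = z := by simp [w, hr']
  have hEser : (fun z : ℍ => Eser (r * s) χ k z) =
      (1 / 2 : ℂ) • latSum k (cuspWeight (r * s) 1 χ) := funext (Eser_eq_latSum _ χ k)
  have hsum : slash k (atkinLehner r s α β γ δ) (Eser (r * s) χ k) z =
      χr (-β) * χs (α * r) * eisensteinAtCusp r s χr χs k z := by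
    have hsqrt : (√(r : ℝ) : ℂ) ^ k * (r : ℂ) ^ (-k) = (√(r : ℝ) : ℂ) ^ (-k) := by
      rw [← sqrt_mul_sqrt_natCast, mul_zpow, ← mul_assoc, zpow_neg,
        mul_inv_cancel₀ (zpow_ne_zero k (sqrt_natCast_ne_zero hr.ne')), one_mul]
    conv_lhs => rw [← hwz]
    rw [slash_atkinLehner hdet hr.ne', ← slash_coe, hEser, ModularForm.SL_smul_slash, latSum_slash,
      Pi.smul_apply, latSum_dilate hr (fun v => dvd_of_cuspWeight_vecMul_ne_zero hdet) (z := z) rfl]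
    simp only [cuspWeight_vecMul_cuspRep_inv hχ hr.ne', latSum, mul_assoc, tsum_mul_left]
    rw [eisensteinAtCusp, ← hsqrt]
    simp only [Pi.smul_apply, smul_eq_mul, latSum]
    ring
  have hβ := hχ.left.sq_eq_one (isCoprime_beta hdet).neg_left
  have hα := hχ.right.sq_eq_one (isCoprime_alpha_mul hdet)
  rw [hsum]
  linear_combination eisensteinAtCusp r s χr χs k z * (χs (α * r) * χs (α * r) * hβ + hα)

theorem eisensteinAtCusp_slash_of_dvd (k : ℤ) (hχ : IsQuadFactorization r s χ χr χs)
    {g : SL(2, ℤ)} (hg : ((r * s : ℕ) : ℤ) ∣ g 1 0) :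
    eisensteinAtCusp r s χr χs k ∣[k] g = χ (g 1 1) • eisensteinAtCusp r s χr χs k := by
  rw [eisensteinAtCusp, ModularForm.SL_smul_slash, latSum_cuspWeight_slash_of_dvd k hχ hg,
    smul_comm]

theorem tendsto_eisensteinAtCusp_slash {k : ℤ} (hk : 3 ≤ k)
    (hχ : IsQuadFactorization r s χ χr χs) (hpar : χ (-1) = (-1) ^ k) (g : SL(2, ℤ)) :
    Tendsto (eisensteinAtCusp r s χr χs k ∣[k] g) cuspStrip
      (𝓝 ((√(r : ℝ) : ℂ) ^ (-k) * cuspWeight s χr χs ![-g 1 0, g 0 0])) := by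
  have hlim := (tendsto_latSum_cuspWeight_slash hk hχ hpar g).const_smul
    ((√(r : ℝ) : ℂ) ^ (-k) / 2)
  rw [smul_eq_mul, ← mul_assoc, div_mul_cancel₀ _ two_ne_zero] at hlim
  rwa [eisensteinAtCusp, ModularForm.SL_smul_slash]

end Eisenstein

/-! ### Cosets over the cusps -/

section Cosets

/-- The coset `g⁻¹Γ₀(N)`, which stands for the right coset `Γ₀(N)g`: the slash translate by `g` of a
function invariant under `Γ₀(N)` depends on it only. -/
def cuspCoset (N : ℕ) (g : SL(2, ℤ)) : SL(2, ℤ) ⧸ CongruenceSubgroup.Gamma0 N :=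
  (g⁻¹ : SL(2, ℤ))

theorem mem_Gamma0_iff_dvd {N : ℕ} {g : SL(2, ℤ)} :
    g ∈ CongruenceSubgroup.Gamma0 N ↔ (N : ℤ) ∣ g 1 0 := by
  rw [CongruenceSubgroup.Gamma0_mem, ZMod.intCast_zmod_eq_zero_iff_dvd]

theorem cuspCoset_eq_iff {N : ℕ} {g h : SL(2, ℤ)} :
    cuspCoset N g = cuspCoset N h ↔ (N : ℤ) ∣ g 1 0 * h 1 1 - g 1 1 * h 1 0 := by
  have hentry : (g * h⁻¹) 1 0 = g 1 0 * h 1 1 - g 1 1 * h 1 0 := by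
    rw [coe_mul, Matrix.mul_apply, Fin.sum_univ_two, SL2_inv_expl]
    simp [sub_eq_add_neg, add_comm]
  rw [cuspCoset, cuspCoset, QuotientGroup.eq, inv_inv, mem_Gamma0_iff_dvd, hentry]

theorem cuspCoset_eq_one_iff {N : ℕ} {g : SL(2, ℤ)} :
    cuspCoset N g = cuspCoset N 1 ↔ (N : ℤ) ∣ g 1 0 := by
  simp [cuspCoset_eq_iff]

theorem slash_eq_of_cuspCoset_eq {N : ℕ} {w : ℤ} {h : ℍ → ℂ}
    (hinv : ∀ g ∈ CongruenceSubgroup.Gamma0 N, h ∣[w] g = h) {g g' : SL(2, ℤ)}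
    (hg : cuspCoset N g = cuspCoset N g') : h ∣[w] g = h ∣[w] g' := by
  have hmem := QuotientGroup.eq.mp hg
  rw [inv_inv] at hmem
  nth_rw 2 [← hinv _ hmem]
  rw [← SlashAction.slash_mul, inv_mul_cancel_right]

variable {r s : ℕ} {α β γ δ : ℤ}

theorem dvd_cuspRep_iff (hdet : (r : ℤ) * α * δ - s * β * γ = 1) (j : ℤ) :
    ((r * s : ℕ) : ℤ) ∣ cuspRep hdet j 1 0 ↔ r = 1 := by
  change ((r * s : ℕ) : ℤ) ∣ s * γ ↔ r = 1
  constructor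
  · intro h
    have hdvd : (r : ℤ) ∣ s * γ := (Int.natCast_dvd_natCast.mpr (dvd_mul_right r s)).trans h
    exact Nat.isUnit_iff.mp (Int.ofNat_isUnit.mp
      ((isCoprime_gamma hdet).symm.isUnit_of_dvd' dvd_rfl hdvd))
  · rintro rfl
    simp

/-- The condition on `j` is a linear congruence modulo `r` with invertible leading coefficient. -/
theorem exists_cuspCoset_cuspRep_eq (hdet : (r : ℤ) * α * δ - s * β * γ = 1) (hr : 0 < r)
    {g : SL(2, ℤ)} (hgs : (s : ℤ) ∣ g 1 0) (hgr : IsCoprime (g 1 0) (r : ℤ)) :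
    ∃ j : Fin r, cuspCoset (r * s) g = cuspCoset (r * s) (cuspRep hdet j) := by
  obtain ⟨c, hc⟩ := hgs
  obtain ⟨u, v, huv⟩ : IsCoprime (c * (s * γ)) (r : ℤ) :=
    (hc ▸ hgr).of_mul_left_right.mul_left (isCoprime_gamma hdet)
  have hr' : (0 : ℤ) < r := by exact_mod_cast hr
  set J : ℤ := u * (g 1 1 * γ) with hJ
  obtain ⟨i, hi⟩ := Int.eq_ofNat_of_zero_le (Int.emod_nonneg J hr'.ne')
  have hir : i < r := by exact_mod_cast hi ▸ Int.emod_lt_of_pos J hr'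
  refine ⟨⟨i, hir⟩, cuspCoset_eq_iff.mpr ⟨c * δ - v * (g 1 1 * γ) - c * (s * γ) * (J / r), ?_⟩⟩
  have hmod : (i : ℤ) = J - r * (J / r) := by rw [← Int.emod_def, hi]
  simp only [cuspRep, Matrix.of_apply, Matrix.cons_val', Matrix.cons_val_zero,
    Matrix.cons_val_one, Matrix.cons_val_fin_one]
  rw [hmod, hc, hJ]
  push_cast
  linear_combination (s * g 1 1 * γ) * huv

theorem cuspCoset_cuspRep_injective (hdet : (r : ℤ) * α * δ - s * β * γ = 1) (hs : 0 < s) :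
    Function.Injective fun j : Fin r => cuspCoset (r * s) (cuspRep hdet j) := by
  intro i j hij
  obtain ⟨t, ht⟩ := cuspCoset_eq_iff.mp hij
  simp only [cuspRep, Matrix.of_apply, Matrix.cons_val', Matrix.cons_val_zero,
    Matrix.cons_val_one, Matrix.cons_val_fin_one, Nat.cast_mul] at ht
  have hdvd : (r : ℤ) ∣ s * γ * (γ * (j - i)) :=
    ⟨t, mul_left_cancel₀ (by exact_mod_cast hs.ne' : (s : ℤ) ≠ 0) (by linear_combination ht)⟩
  have hγ := isCoprime_gamma hdet
  have hsub : (r : ℤ) ∣ j - i :=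
    hγ.of_mul_left_right.symm.dvd_of_dvd_mul_left (hγ.symm.dvd_of_dvd_mul_left hdvd)
  have hzero := Int.eq_zero_of_abs_lt_dvd hsub (by rw [abs_lt]; omega)
  ext
  omega

end Cosets

namespace IsWeaklyHolInfty

variable {D : ℕ} {χ : ℤ → ℂ} {w : ℤ} {f : ℂ → ℂ} {c : ℤ → ℂ}

theorem hasQExp (hf : IsWeaklyHolInfty D χ w f c) : HasQExp id c fun z : ℍ => f z :=
  fun z => hf.fourier z z.im_pos

theorem mdifferentiable (hf : IsWeaklyHolInfty D χ w f c) : MDiff fun z : ℍ => f z :=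
  mdifferentiable_iff.mpr <| hf.holo.congr fun z hz => by simp [ofComplex_apply_of_im_pos hz]

theorem slash_of_dvd (hf : IsWeaklyHolInfty D χ w f c) {g : SL(2, ℤ)} (hg : (D : ℤ) ∣ g 1 0) :
    (fun z : ℍ => f z) ∣[w] g = χ (g 1 1) • fun z : ℍ => f z :=
  funext fun z => (slash_coe w f g z).trans (hf.transform g hg z z.im_pos)

theorem isBoundedAtImInfty_slash (hf : IsWeaklyHolInfty D χ w f c) {g : SL(2, ℤ)}
    (hg : ¬(D : ℤ) ∣ g 1 0) : IsBoundedAtImInfty ((fun z : ℍ => f z) ∣[w] g) := by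
  obtain ⟨C, hC⟩ := hf.bdd_at_other_cusps g hg
  exact isBoundedAtImInfty_iff.mpr ⟨C, 1, fun z hz => slash_coe w f g z ▸ hC z hz⟩

end IsWeaklyHolInfty

theorem tendsto_slash_cuspRep {r s : ℕ} {α β γ δ w : ℤ} {f : ℂ → ℂ} {a : ℤ → ℂ}
    (hdet : (r : ℤ) * α * δ - s * β * γ = 1) (hr : 0 < r)
    (ha : HasQExp id a fun z : ℍ => slash w (atkinLehner r s α β γ δ) f z)
    (hbdd : IsBoundedAtImInfty ((fun z : ℍ => f z) ∣[w] cuspRep hdet 0)) (j : ℤ) :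
    Tendsto ((fun z : ℍ => f z) ∣[w] cuspRep hdet j) atImInfty
      (𝓝 ((√(r : ℝ) : ℂ) ^ (-w) * a 0)) := by
  have hr' : (r : ℂ) ≠ 0 := by exact_mod_cast hr.ne'
  have hr1 : (1 : ℝ) ≤ r := by exact_mod_cast hr
  have hneg : ∀ m : ℤ, m < 0 → a m = 0 := fun m hm => by
    obtain ⟨C, A, hC⟩ := isBoundedAtImInfty_iff.mp hbdd
    refine ha.coeff_eq_zero_of_isBoundedAtImInfty (isBoundedAtImInfty_iff.mpr
      ⟨‖(√(r : ℝ) : ℂ) ^ w‖ * C, A, fun z hz => ?_⟩) hm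
    let u : ℍ := ⟨r * z, by simpa using mul_pos (Nat.cast_pos.mpr hr) z.im_pos⟩
    have huz : ((u : ℂ) + (0 : ℤ)) / r = z := by simp [u, hr']
    have hu : A ≤ u.im := hz.trans (by simpa [u] using le_mul_of_one_le_left z.im_pos.le hr1)
    rw [← huz, slash_atkinLehner hdet hr.ne', ← slash_coe, norm_mul]
    exact mul_le_mul_of_nonneg_left (hC u hu) (norm_nonneg _)
  let φ (z : ℍ) : ℍ := ⟨((z : ℂ) + j) / r, by simpa using div_pos z.im_pos (Nat.cast_pos.mpr hr)⟩
  have hφ : Tendsto φ atImInfty atImInfty := by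
    refine tendsto_comap_iff.mpr ?_
    refine (tendsto_comap.atTop_div_const (Nat.cast_pos.mpr hr)).congr fun z => ?_
    simp [φ]
  have hlim := ((ha.tendsto_atImInfty hneg).comp hφ).const_mul ((√(r : ℝ) : ℂ) ^ (-w))
  simp only [id, tsum_ite_eq] at hlim
  refine hlim.congr fun z => ?_
  rw [slash_coe, Function.comp_apply, slash_atkinLehner hdet hr.ne', ← mul_assoc, zpow_neg,
    inv_mul_cancel₀ (zpow_ne_zero w (sqrt_natCast_ne_zero hr.ne')), one_mul]

/-! ### The constant terms of the product -/

theorem finsum_nat_eq_zero_add {M : Type*} [AddCommMonoid M] {u : ℕ → M} (hu : u.support.Finite) :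
    ∑ᶠ m, u m = u 0 + ∑ᶠ m ∈ {m | 0 < m}, u m := by
  have huniv : (Set.univ : Set ℕ) = insert 0 {m | 0 < m} := by
    ext m
    simpa using m.eq_zero_or_pos
  rw [← finsum_mem_univ, huniv, finsum_mem_insert' _ (by simp) (hu.inter_of_right _)]

theorem finite_support_mul_of_bddBelow {c : ℤ → ℂ} (hc : ∃ m₀ : ℤ, ∀ m : ℤ, m < -m₀ → c m = 0)
    (e : ℕ → ℂ) : (fun m : ℕ => c (-(m : ℤ)) * e m).support.Finite := by
  obtain ⟨m₀, hm₀⟩ := hc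
  refine (Set.finite_le_nat m₀.toNat).subset fun m hm => ?_
  by_contra hlt
  exact hm (by simp only [hm₀ (-m) (by simp at hlt; omega), zero_mul])

theorem period_mul_eq {c : ℤ → ℂ} {e : ℕ → ℂ} {F E : ℍ → ℂ} (hF : HasQExp id c F)
    (hE : HasQExp Nat.cast e E) (hc : ∃ m₀ : ℤ, ∀ m : ℤ, m < -m₀ → c m = 0) {y : ℝ} (hy : 0 < y) :
    period (F * E) y = c 0 * e 0 + ∑ᶠ m ∈ {m : ℕ | 0 < m}, c (-(m : ℤ)) * e m := by
  have hfin := finite_support_mul_of_bddBelow hc e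
  rw [← (hF.hasSum_period_mul hE hy).tsum_eq, tsum_eq_finsum hfin, finsum_nat_eq_zero_add hfin]
  simp

section Pairing

variable {r s : ℕ} {χ χr χs : ℤ → ℂ} {α β γ δ k : ℤ} {F E : ℍ → ℂ}

theorem tendsto_period_mul_slash (hF : MDiff F) (hE : MDiff E) {g : SL(2, ℤ)} {L : ℂ}
    (hlim : Tendsto ((F ∣[2 - k] g) * (E ∣[k] g)) cuspStrip (𝓝 L)) :
    Tendsto (period ((F * E) ∣[(2 : ℤ)] g)) atTop (𝓝 L) := by
  have hslash := ModularForm.mul_slash_SL2 (2 - k) k g F E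
  rw [sub_add_cancel] at hslash
  exact tendsto_period ((hF.mul hE).slash 2 (g : GL (Fin 2) ℝ)).continuous (hslash ▸ hlim)

theorem cuspWeight_eq_zero_of_forall_ne (hχ : IsQuadFactorization r s χ χr χs) (hr : 0 < r)
    (hdet : (r : ℤ) * α * δ - s * β * γ = 1) {g : SL(2, ℤ)}
    (hg : ∀ j : Fin r, cuspCoset (r * s) g ≠ cuspCoset (r * s) (cuspRep hdet j)) :
    cuspWeight s χr χs ![-g 1 0, g 0 0] = 0 := by
  by_contra h
  obtain ⟨-, hs, hr0, -⟩ := cuspWeight_ne_zero h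
  obtain ⟨j, hj⟩ := exists_cuspCoset_cuspRep_eq hdet hr (by simpa using hs)
    ((IsCoprime.neg_left_iff _ _).mp (hχ.left.ne_zero_iff.mp hr0))
  exact hg j hj

theorem cuspWeight_cuspRep (hdet : (r : ℤ) * α * δ - s * β * γ = 1) (j : ℤ) :
    cuspWeight s χr χs ![-cuspRep hdet j 1 0, cuspRep hdet j 0 0] = χr (-(s * γ)) * χs α :=
  if_pos ⟨⟨β, r * δ, by
    change β * -(s * γ) + r * δ * α = 1
    linear_combination hdet⟩, by simp [cuspRep]⟩

theorem mul_slash_of_dvd (hχ : IsQuadDirChar (r * s) χ) {g : SL(2, ℤ)}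
    (hg : ((r * s : ℕ) : ℤ) ∣ g 1 0) (hF : F ∣[2 - k] g = χ (g 1 1) • F)
    (hE : E ∣[k] g = χ (g 1 1) • E) : (F * E) ∣[(2 : ℤ)] g = F * E := by
  obtain ⟨t, ht⟩ := hg
  have hcoprime : IsCoprime (g 1 1) ((r * s : ℕ) : ℤ) :=
    ⟨g 0 0, -(g 0 1 * t), by linear_combination det_fin_two_eq_one g + g 0 1 * ht⟩
  have hslash := ModularForm.mul_slash_SL2 (2 - k) k g F E
  rw [sub_add_cancel, hF, hE, smul_mul_smul_comm, hχ.sq_eq_one hcoprime, one_smul] at hslash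
  exact hslash

theorem coeff_zero_eisensteinAtCusp {e : ℕ → ℂ} (hk : 3 ≤ k) (hχ : IsQuadFactorization r s χ χr χs)
    (hpar : χ (-1) = (-1) ^ k) (he : HasQExp Nat.cast e (eisensteinAtCusp r s χr χs k)) :
    e 0 = (√(r : ℝ) : ℂ) ^ (-k) * χr 0 := by
  have hneg (m : ℕ) (hm : (m : ℤ) < 0) : e m = 0 := absurd hm (by simp)
  have hcont := (he.mdifferentiable hneg).continuous
  have hE := tendsto_eisensteinAtCusp_slash hk hχ hpar 1
  rw [SlashAction.slash_one] at hE
  have hvalue := tendsto_nhds_unique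
    (tendsto_period hcont ((he.tendsto_atImInfty hneg).mono_left inf_le_left))
    (tendsto_period hcont hE)
  simpa [cuspWeight, isCoprime_zero_left, hχ.right.map_one] using hvalue

theorem coeff_atkinLehner_one {w : ℤ} {f : ℂ → ℂ} {c a : ℤ → ℂ}
    (hχ : IsQuadFactorization 1 s χ χr χs) (hdet : ((1 : ℕ) : ℤ) * α * δ - s * β * γ = 1)
    (hf : IsWeaklyHolInfty (1 * s) χ w f c)
    (ha : HasQExp id a fun z : ℍ => χr β * χs α * slash w (atkinLehner 1 s α β γ δ) f z) :
    a = c := by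
  have hχr (x : ℤ) : χr x = 1 := by rw [← hχ.left.map_one]; exact hχ.left.congr Int.modEq_one
  have hαδ : χs α = χs (cuspRep hdet 0 1 1) := hχ.right.eq_of_mul_modEq_one
    (Int.modEq_iff_dvd.mpr ⟨-(β * γ), by
      change 1 - α * (s * γ * 0 + (1 : ℕ) * δ) = s * -(β * γ)
      linear_combination -hdet⟩)
  have hα := hχ.right.sq_eq_one (isCoprime_alpha_mul hdet).of_mul_left_left
  have hslash (z : ℍ) : χr β * χs α * slash w (atkinLehner 1 s α β γ δ) f z = f z := by
    have h0 := slash_atkinLehner hdet one_ne_zero w f 0 z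
    simp only [Int.cast_zero, add_zero, Nat.cast_one, div_one, Real.sqrt_one, Complex.ofReal_one,
      one_zpow, one_mul] at h0
    rw [h0, hf.transform _ ((dvd_cuspRep_iff hdet 0).mpr rfl) z z.im_pos, hχ.eq_mul, hχr, hχr,
      one_mul, one_mul, ← hαδ, ← mul_assoc, hα, one_mul]
  exact ha.coeff_unique (funext hslash ▸ hf.hasQExp)

section Limits

variable {f : ℂ → ℂ} {c a : ℤ → ℂ}

theorem tendsto_mul_slash_cuspRep (hk : 3 ≤ k) (hχ : IsQuadFactorization r s χ χr χs)
    (hpar : χ (-1) = (-1) ^ k) (hr : 0 < r) (hdet : (r : ℤ) * α * δ - s * β * γ = 1)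
    (hbdd : IsBoundedAtImInfty ((fun z : ℍ => f z) ∣[2 - k] cuspRep hdet 0))
    (ha : HasQExp id a fun z : ℍ => χr β * χs α * slash (2 - k) (atkinLehner r s α β γ δ) f z)
    (j : ℤ) :
    Tendsto (((fun z : ℍ => f z) ∣[2 - k] cuspRep hdet j) *
      (eisensteinAtCusp r s χr χs k ∣[k] cuspRep hdet j)) cuspStrip (𝓝 (a 0 / r)) := by
  have hβ := hχ.left.sq_eq_one (isCoprime_beta hdet)
  have hα := hχ.right.sq_eq_one (isCoprime_alpha_mul hdet).of_mul_left_left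
  have hW : HasQExp id (fun m => χr β * χs α * a m)
      fun z : ℍ => slash (2 - k) (atkinLehner r s α β γ δ) f z := fun z => by
    have hsum := (ha z).mul_left (χr β * χs α)
    rw [← mul_assoc, mul_mul_mul_comm, hβ, hα, one_mul, one_mul] at hsum
    exact hsum.congr_fun fun m => mul_assoc _ _ _
  have hF := (tendsto_slash_cuspRep hdet hr hW hbdd j).mono_left (inf_le_left : cuspStrip ≤ _)
  have hE := tendsto_eisensteinAtCusp_slash hk hχ hpar (cuspRep hdet j)
  have hβγ : χr β * χr (-(s * γ)) = 1 := by
    rw [← hχ.left.mul, ← hχ.left.map_one]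
    exact hχ.left.congr (Int.modEq_iff_dvd.mpr ⟨α * δ, by linear_combination -hdet⟩)
  have hsqrt : (√(r : ℝ) : ℂ) ^ (-(2 - k)) * (√(r : ℝ) : ℂ) ^ (-k) = (r : ℂ)⁻¹ := by
    rw [← zpow_add₀ (sqrt_natCast_ne_zero hr.ne'), ← sqrt_mul_sqrt_natCast, ← zpow_two, ← zpow_neg]
    congr 1
    ring
  have hlimit : (√(r : ℝ) : ℂ) ^ (-(2 - k)) * (χr β * χs α * a 0) *
      ((√(r : ℝ) : ℂ) ^ (-k) * (χr (-(s * γ)) * χs α)) = a 0 / r := by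
    linear_combination (a 0 * (χr β * χr (-(s * γ))) * (χs α * χs α)) * hsqrt +
      a 0 * (r : ℂ)⁻¹ * (χs α * χs α) * hβγ + a 0 * (r : ℂ)⁻¹ * hα
  rw [cuspWeight_cuspRep] at hE
  exact hlimit ▸ hF.mul hE

theorem tendsto_mul_slash_of_forall_ne (hk : 3 ≤ k) (hχ : IsQuadFactorization r s χ χr χs)
    (hpar : χ (-1) = (-1) ^ k) (hr : 0 < r) (hdet : (r : ℤ) * α * δ - s * β * γ = 1)
    {g : SL(2, ℤ)} (hbdd : IsBoundedAtImInfty (F ∣[2 - k] g))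
    (hg : ∀ j : Fin r, cuspCoset (r * s) g ≠ cuspCoset (r * s) (cuspRep hdet j)) :
    Tendsto ((F ∣[2 - k] g) * (eisensteinAtCusp r s χr χs k ∣[k] g)) cuspStrip (𝓝 0) := by
  have hE := tendsto_eisensteinAtCusp_slash hk hχ hpar g
  rw [cuspWeight_eq_zero_of_forall_ne hχ hr hdet hg, mul_zero] at hE
  have hF := (Asymptotics.isBigO_one_iff ℝ).mp (hbdd.mono (inf_le_left : cuspStrip ≤ _))
  exact mul_comm (F ∣[2 - k] g) _ ▸ hE.zero_mul_isBoundedUnder_le hF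

theorem coeff_zero_mul_coeff_zero {e : ℕ → ℂ} (hk : 3 ≤ k) (hχ : IsQuadFactorization r s χ χr χs)
    (hpar : χ (-1) = (-1) ^ k) (hdet : (r : ℤ) * α * δ - s * β * γ = 1)
    (hf : IsWeaklyHolInfty (r * s) χ (2 - k) f c)
    (ha : HasQExp id a fun z : ℍ => χr β * χs α * slash (2 - k) (atkinLehner r s α β γ δ) f z)
    (he : HasQExp Nat.cast e (eisensteinAtCusp r s χr χs k)) :
    c 0 * e 0 = if r = 1 then a 0 else 0 := by
  rw [coeff_zero_eisensteinAtCusp hk hχ hpar he, hχ.left.map_zero]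
  split_ifs with hr1
  · subst hr1
    simp [coeff_atkinLehner_one hχ hdet hf ha]
  · simp

open scoped Classical in
/-- The function on the cosets of `Γ₀(rs)` with value `x` at each coset over the cusp `∞_r`, plus
`S` at the trivial coset: the constant terms of the product `f E_r`. -/
def cuspTerm (hdet : (r : ℤ) * α * δ - s * β * γ = 1) (S x : ℂ)
    (q : SL(2, ℤ) ⧸ CongruenceSubgroup.Gamma0 (r * s)) : ℂ :=
  (if q = cuspCoset (r * s) 1 then S else 0) +
    ∑ j : Fin r, if q = cuspCoset (r * s) (cuspRep hdet j) then x else 0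

theorem sum_cuspTerm [Fintype (SL(2, ℤ) ⧸ CongruenceSubgroup.Gamma0 (r * s))]
    (hdet : (r : ℤ) * α * δ - s * β * γ = 1) (S x : ℂ) :
    ∑ q, cuspTerm hdet S x q = S + r * x := by
  classical
  simp only [cuspTerm]
  rw [Finset.sum_add_distrib, Finset.sum_comm]
  simp

theorem cuspTerm_cuspRep (hdet : (r : ℤ) * α * δ - s * β * γ = 1) (hs : 0 < s) (S x : ℂ)
    (j : Fin r) : cuspTerm hdet S x (cuspCoset (r * s) (cuspRep hdet j)) =
      (if r = 1 then S else 0) + x := by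
  have hinj (i : Fin r) : cuspCoset (r * s) (cuspRep hdet j) = cuspCoset (r * s) (cuspRep hdet i) ↔
      j = i := (cuspCoset_cuspRep_injective hdet hs).eq_iff
  simp only [cuspTerm, cuspCoset_eq_one_iff, dvd_cuspRep_iff hdet, hinj, Finset.sum_ite_eq,
    Finset.mem_univ, if_true]

theorem cuspTerm_of_forall_ne (hdet : (r : ℤ) * α * δ - s * β * γ = 1) (S x : ℂ) {g : SL(2, ℤ)}
    (hg : ∀ j : Fin r, cuspCoset (r * s) g ≠ cuspCoset (r * s) (cuspRep hdet j)) :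
    cuspTerm hdet S x (cuspCoset (r * s) g) = if ((r * s : ℕ) : ℤ) ∣ g 1 0 then S else 0 := by
  simp [cuspTerm, cuspCoset_eq_one_iff, hg, -Nat.cast_mul]

theorem cuspTerm_of_dvd (hdet : (r : ℤ) * α * δ - s * β * γ = 1) (hs : 0 < s) (S x : ℂ)
    {g : SL(2, ℤ)} (hg : ((r * s : ℕ) : ℤ) ∣ g 1 0) :
    cuspTerm hdet S x (cuspCoset (r * s) g) = S + if r = 1 then x else 0 := by
  by_cases h : ∃ j : Fin r, cuspCoset (r * s) g = cuspCoset (r * s) (cuspRep hdet j)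
  · obtain ⟨j, hj⟩ := h
    have hr1 : r = 1 := (dvd_cuspRep_iff hdet j).mp
      (cuspCoset_eq_one_iff.mp (hj ▸ cuspCoset_eq_one_iff.mpr hg))
    rw [hj, cuspTerm_cuspRep hdet hs, if_pos hr1, if_pos hr1]
  · rw [cuspTerm_of_forall_ne hdet S x (not_exists.mp h), if_pos hg, if_neg, add_zero]
    rintro rfl
    exact h ⟨0, (cuspCoset_eq_one_iff.mpr hg).trans
      (cuspCoset_eq_one_iff.mpr ((dvd_cuspRep_iff hdet _).mpr rfl)).symm⟩

theorem gamma0_slash_mul_eisensteinAtCusp (hχ : IsQuadFactorization r s χ χr χs)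
    (hχD : IsQuadDirChar (r * s) χ)
    (hf : IsWeaklyHolInfty (r * s) χ (2 - k) f c) {g : SL(2, ℤ)}
    (hg : ((r * s : ℕ) : ℤ) ∣ g 1 0) :
    ((fun z : ℍ => f z) * eisensteinAtCusp r s χr χs k) ∣[(2 : ℤ)] g =
      (fun z : ℍ => f z) * eisensteinAtCusp r s χr χs k :=
  mul_slash_of_dvd hχD hg (hf.slash_of_dvd hg) (eisensteinAtCusp_slash_of_dvd k hχ hg)

theorem tendsto_period_slash_cuspTerm {e : ℕ → ℂ} (hk : 3 ≤ k) (hχD : IsQuadDirChar (r * s) χ)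
    (hχ : IsQuadFactorization r s χ χr χs) (hpar : χ (-1) = (-1) ^ k) (hr : 0 < r) (hs : 0 < s)
    (hdet : (r : ℤ) * α * δ - s * β * γ = 1) (hf : IsWeaklyHolInfty (r * s) χ (2 - k) f c)
    (ha : HasQExp id a fun z : ℍ => χr β * χs α * slash (2 - k) (atkinLehner r s α β γ δ) f z)
    (he : HasQExp Nat.cast e (eisensteinAtCusp r s χr χs k)) (g : SL(2, ℤ)) :
    Tendsto (period (((fun z : ℍ => f z) * eisensteinAtCusp r s χr χs k) ∣[(2 : ℤ)] g)) atTop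
      (𝓝 (cuspTerm hdet (∑ᶠ m ∈ {m : ℕ | 0 < m}, c (-(m : ℤ)) * e m) (a 0 / r)
        (cuspCoset (r * s) g))) := by
  have hinv (g : SL(2, ℤ)) (hg : ((r * s : ℕ) : ℤ) ∣ g 1 0) :=
    gamma0_slash_mul_eisensteinAtCusp hχ hχD hf hg
  have hE := he.mdifferentiable fun m hm => absurd hm (by simp)
  by_cases hg : ((r * s : ℕ) : ℤ) ∣ g 1 0
  · have hconst : c 0 * e 0 = if r = 1 then a 0 / r else 0 := by
      rw [coeff_zero_mul_coeff_zero hk hχ hpar hdet hf ha he]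
      split_ifs with hr1 <;> simp [hr1]
    rw [hinv g hg, cuspTerm_of_dvd hdet hs _ _ hg, ← hconst, add_comm]
    refine tendsto_const_nhds.congr' ?_
    filter_upwards [eventually_gt_atTop 0] with y hy
    exact (period_mul_eq hf.hasQExp he hf.coeff_bddBelow hy).symm
  by_cases hcusp : ∃ j : Fin r, cuspCoset (r * s) g = cuspCoset (r * s) (cuspRep hdet j)
  · obtain ⟨j, hj⟩ := hcusp
    have hr1 : r ≠ 1 := fun hr1 => hg (cuspCoset_eq_one_iff.mp
      (hj.trans (cuspCoset_eq_one_iff.mpr ((dvd_cuspRep_iff hdet j).mpr hr1))))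
    have hbdd := hf.isBoundedAtImInfty_slash fun h => hr1 ((dvd_cuspRep_iff hdet 0).mp h)
    rw [slash_eq_of_cuspCoset_eq (fun σ hσ => hinv σ (mem_Gamma0_iff_dvd.mp hσ)) hj, hj,
      cuspTerm_cuspRep hdet hs, if_neg hr1, zero_add]
    exact tendsto_period_mul_slash hf.mdifferentiable hE
      (tendsto_mul_slash_cuspRep hk hχ hpar hr hdet hbdd ha j)
  · have hne := not_exists.mp hcusp
    rw [cuspTerm_of_forall_ne hdet _ _ hne, if_neg hg]
    exact tendsto_period_mul_slash hf.mdifferentiable hE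
      (tendsto_mul_slash_of_forall_ne hk hχ hpar hr hdet (hf.isBoundedAtImInfty_slash hg) hne)

theorem coeff_zero_add_finsum_eq_zero {e : ℕ → ℂ} (hk : 3 ≤ k) (hχD : IsQuadDirChar (r * s) χ)
    (hχ : IsQuadFactorization r s χ χr χs) (hpar : χ (-1) = (-1) ^ k) (hr : 0 < r) (hs : 0 < s)
    (hdet : (r : ℤ) * α * δ - s * β * γ = 1) (hf : IsWeaklyHolInfty (r * s) χ (2 - k) f c)
    (ha : HasQExp id a fun z : ℍ => χr β * χs α * slash (2 - k) (atkinLehner r s α β γ δ) f z)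
    (he : HasQExp Nat.cast e (eisensteinAtCusp r s χr χs k)) :
    a 0 + ∑ᶠ m ∈ {m : ℕ | 0 < m}, c (-(m : ℤ)) * e m = 0 := by
  have : NeZero (r * s) := ⟨(Nat.mul_pos hr hs).ne'⟩
  have : Fintype (SL(2, ℤ) ⧸ CongruenceSubgroup.Gamma0 (r * s)) := Fintype.ofFinite _
  have hE := he.mdifferentiable fun m hm => absurd hm (by simp)
  have hsum := sum_limit_period_eq_zero (hf.mdifferentiable.mul hE)
    (fun g hg => gamma0_slash_mul_eisensteinAtCusp hχ hχD hf (mem_Gamma0_iff_dvd.mp hg))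
    (tendsto_period_slash_cuspTerm hk hχD hχ hpar hr hs hdet hf ha he)
  rwa [sum_cuspTerm, mul_div_cancel₀ _ (by exact_mod_cast hr.ne'), add_comm] at hsum

end Limits

end Pairing

theorem eisenstein_constant_term_pairing_general
    (D : ℕ) (hDpos : 0 < D)
    (k : ℤ) (hk : 3 ≤ k)
    (χ : ℤ → ℂ) (hχ : IsQuadDirChar D χ) (hpar : χ (-1) = (-1) ^ k)
    (r s : ℕ) (hrs : r * s = D)
    (χr χs : ℤ → ℂ)
    (hχr : ∀ x y : ℤ, Int.ModEq (r : ℤ) y x → Int.ModEq (s : ℤ) y 1 → χr x = χ y)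
    (hχs : ∀ x y : ℤ, Int.ModEq (s : ℤ) y x → Int.ModEq (r : ℤ) y 1 → χs x = χ y)
    (α β γ δ : ℤ) (hdet : (r : ℤ) * α * δ - (s : ℤ) * β * γ = 1)
    (er : ℕ → ℂ)
    (her : ∀ τ ∈ UHP,
      HasSum (fun m : ℕ => er m * Complex.exp (2 * (Real.pi : ℂ) * Complex.I * m * τ))
        (χr (-β) * χs (α * (r : ℤ)) *
          slash k !![(r : ℝ) * (α : ℝ), (β : ℝ); (D : ℝ) * (γ : ℝ), (r : ℝ) * (δ : ℝ)]
            (Eser D χ k) τ))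
    (f : ℂ → ℂ) (c : ℤ → ℂ) (hf : IsWeaklyHolInfty D χ (2 - k) f c)
    (cr : ℤ → ℂ)
    (hcr : ∀ τ ∈ UHP,
      HasSum (fun m : ℤ => cr m * Complex.exp (2 * (Real.pi : ℂ) * Complex.I * m * τ))
        (χr β * χs α *
          slash (2 - k) !![(r : ℝ) * (α : ℝ), (β : ℝ); (D : ℝ) * (γ : ℝ), (r : ℝ) * (δ : ℝ)]
            f τ)) :
    cr 0 + ∑ᶠ m ∈ {m : ℕ | 0 < m}, c (-(m : ℤ)) * er m = 0 := by
  subst hrs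
  have hr : 0 < r := Nat.pos_of_mul_pos_right hDpos
  have hs : 0 < s := Nat.pos_of_mul_pos_left hDpos
  have hcoprime : IsCoprime (r : ℤ) s := ⟨α * δ, -(β * γ), by linear_combination hdet⟩
  have hfact := hχ.isQuadFactorization hcoprime hχr hχs
  have he : HasQExp Nat.cast er (eisensteinAtCusp r s χr χs k) := fun z => by
    rw [← slash_atkinLehner_Eser hr hfact hdet]
    exact her z z.im_pos
  exact coeff_zero_add_finsum_eq_zero hk hχ hfact hpar hr hs hdet hf
    (fun z => hcr z z.im_pos) he

/-- The constant term of `f ∈ M^{!,∞}_{2-k}(D,χ)` at the cusp `∞_r` satisfies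
`c_r(0) + ∑_{m>0} c(-m) e_r(m) = 0`, where `∑ e_r(m) q^m` is the `q`-expansion (at `∞`) of the
normalized Eisenstein series `E_r = χ_r(-β) χ_s(αr) (E ∣[k] W_r)` attached to the cusp `∞_r`,
and `∑ c_r(m) q^m` is the `q`-expansion of `χ_r(β) χ_s(α) (f ∣[2-k] W_r)`. -/
theorem eisenstein_constant_term_pairing
    (D : ℕ) (hD : Odd D) (hDsf : Squarefree D) (hDpos : 0 < D)
    (k : ℤ) (hk : 3 ≤ k)
    (χ : ℤ → ℂ) (hχ : IsQuadDirChar D χ) (hpar : χ (-1) = (-1) ^ k)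
    -- the divisor r of D, with s = D / r
    (r s : ℕ) (hr : 0 < r) (hrs : r * s = D)
    -- the factorization χ = χ_r ⬝ χ_s into characters mod r and mod s
    (χr χs : ℤ → ℂ)
    (hχr : ∀ x y : ℤ, Int.ModEq (r : ℤ) y x → Int.ModEq (s : ℤ) y 1 → χr x = χ y)
    (hχs : ∀ x y : ℤ, Int.ModEq (s : ℤ) y x → Int.ModEq (r : ℤ) y 1 → χs x = χ y)
    -- the Atkin–Lehner matrix W_r = [[rα, β], [Dγ, rδ]] of determinant r
    (α β γ δ : ℤ) (hdet : (r : ℤ) * α * δ - (s : ℤ) * β * γ = 1)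
    -- e_r : the Fourier coefficients of E_r at ∞
    (er : ℕ → ℂ)
    (her : ∀ τ ∈ UHP,
      HasSum (fun m : ℕ => er m * Complex.exp (2 * (Real.pi : ℂ) * Complex.I * m * τ))
        (χr (-β) * χs (α * (r : ℤ)) *
          slash k !![(r : ℝ) * (α : ℝ), (β : ℝ); (D : ℝ) * (γ : ℝ), (r : ℝ) * (δ : ℝ)]
            (Eser D χ k) τ))
    -- f ∈ M^{!,∞}_{2-k}(D, χ) with coefficients c
    (f : ℂ → ℂ) (c : ℤ → ℂ) (hf : IsWeaklyHolInfty D χ (2 - k) f c)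
    -- c_r : the Fourier coefficients of f at the cusp ∞_r
    (cr : ℤ → ℂ) (hcrbd : ∃ M : ℤ, ∀ m : ℤ, m < M → cr m = 0)
    (hcr : ∀ τ ∈ UHP,
      HasSum (fun m : ℤ => cr m * Complex.exp (2 * (Real.pi : ℂ) * Complex.I * m * τ))
        (χr β * χs α *
          slash (2 - k) !![(r : ℝ) * (α : ℝ), (β : ℝ); (D : ℝ) * (γ : ℝ), (r : ℝ) * (δ : ℝ)]
            f τ)) :
    cr 0 + ∑ᶠ m ∈ {m : ℕ | 0 < m}, c (-(m : ℤ)) * er m = 0 :=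
  eisenstein_constant_term_pairing_general D hDpos k hk χ hχ hpar r s hrs χr χs hχr hχs α β γ δ
    hdet er her f c hf cr hcr
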